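/- arXiv:1807.10954 — 3 statements merged into one kernel-verified Lean document; each statement's English description precedes it below -/
import Mathlib

section
/- For every integer w ≥ 3, there exists a (3w, 5w, w)-domination mapping. -/
/-- Hamming weight of a binary word. -/
def wt {n : ℕ} (y : Fin n → Bool) : ℕ := (Finset.univ.filter fun j => y j = true).card

/-- A domination graph: a bipartite graph on [m] ∪ [n] with no isolated right vertices. -/
def IsDominationGraph (m n : ℕ) (E : Finset (Fin m × Fin n)) : Prop :=
  ∀ j : Fin n, ∃ i : Fin m, (i, j) ∈ E

/-- `x` dominates `y` (with respect to the edge set `E`). -/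
def Dominates {m n : ℕ} (E : Finset (Fin m × Fin n))
    (x : Fin m → Bool) (y : Fin n → Bool) : Prop :=
  ∀ e ∈ E, x e.1 = false → y e.2 = false

/-- `φ` is a `G`-domination mapping: an injective map from {0,1}^m into B(n,w) such that
for every edge (i,j) ∈ E and every x, x_i = 0 implies φ(x)_j = 0. -/
def IsGDominating {m n : ℕ} (E : Finset (Fin m × Fin n)) (w : ℕ)
    (φ : (Fin m → Bool) → (Fin n → Bool)) : Prop :=
  Function.Injective φ ∧ (∀ x, wt (φ x) ≤ w) ∧ ∀ x : Fin m → Bool, Dominates E x (φ x)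

/-- An (m,n,w)-domination mapping: G-dominating for some domination graph G. -/
def IsDominationMapping (m n w : ℕ) (φ : (Fin m → Bool) → (Fin n → Bool)) : Prop :=
  ∃ E : Finset (Fin m × Fin n), IsDominationGraph m n E ∧ IsGDominating E w φ

/-- Existence of an (m,n,w)-domination mapping. -/
def ExistsDomMap (m n w : ℕ) : Prop := ∃ φ, IsDominationMapping m n w φ

/-- Degree of a left vertex `i`. -/
def degLeft {m n : ℕ} (E : Finset (Fin m × Fin n)) (i : Fin m) : ℕ :=
  (E.filter fun e => e.1 = i).card

/-- Type-level version of domination mappings. -/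
def Ex (A B : Type) (w : ℕ) : Prop :=
  ∃ (p : B → A) (φ : Finset A → Finset B), Function.Injective φ ∧
    ∀ X, (φ X).card ≤ w ∧ ∀ b ∈ φ X, p b ∈ X

lemma Ex.sum {A B A' B' : Type} {w w' : ℕ} (h : Ex A B w) (h' : Ex A' B' w') :
    Ex (A ⊕ A') (B ⊕ B') (w + w') := by
  obtain ⟨p, φ, hi, hφ⟩ := h
  obtain ⟨p', φ', hi', hφ'⟩ := h'
  refine ⟨Sum.map p p', fun X => (φ X.toLeft).disjSum (φ' X.toRight), ?_, ?_⟩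
  · intro X Y hXY
    have h1 := congrArg Finset.toLeft hXY
    have h2 := congrArg Finset.toRight hXY
    simp only [Finset.toLeft_disjSum, Finset.toRight_disjSum] at h1 h2
    have h1 := hi h1
    have h2 := hi' h2
    rw [← Finset.toLeft_disjSum_toRight (u := X), ← Finset.toLeft_disjSum_toRight (u := Y), h1, h2]
  · intro X
    refine ⟨?_, ?_⟩
    · rw [Finset.card_disjSum]
      exact Nat.add_le_add (hφ _).1 (hφ' _).1
    · rintro (b | b) hb
      · have := (hφ _).2 b (Finset.inl_mem_disjSum.1 hb)
        simpa using this
      · have := (hφ' _).2 b (Finset.inr_mem_disjSum.1 hb)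
        simpa using this

lemma Ex.exists {A B : Type} [Fintype A] [Fintype B] {m n w : ℕ} (h : Ex A B w)
    (hA : Fintype.card A = m) (hB : Fintype.card B = n) : ExistsDomMap m n w := by
  classical
  obtain ⟨p, φ, hi, hφ⟩ := h
  let e : A ≃ Fin m := Fintype.equivFinOfCardEq hA
  let f : B ≃ Fin n := Fintype.equivFinOfCardEq hB
  refine ⟨fun x j => decide (f.symm j ∈ φ (Finset.univ.filter fun a => x (e a) = true)),
    Finset.univ.filter fun q => q.1 = e (p (f.symm q.2)), ?_, ?_, ?_, ?_⟩
  · intro j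
    exact ⟨e (p (f.symm j)), by simp⟩
  · intro x y hxy
    have h1 : φ (Finset.univ.filter fun a => x (e a) = true)
        = φ (Finset.univ.filter fun a => y (e a) = true) := by
      ext b
      have := congrFun hxy (f b)
      simpa using this
    have h2 := hi h1
    funext i
    have h3 : e.symm i ∈ (Finset.univ.filter fun a => x (e a) = true) ↔
      e.symm i ∈ (Finset.univ.filter fun a => y (e a) = true) := by rw [h2]
    simp only [Finset.mem_filter, Finset.mem_univ, true_and, Equiv.apply_symm_apply] at h3
    exact Bool.eq_iff_iff.2 h3
  · intro x
    refine le_trans (le_of_eq ?_) (hφ (Finset.univ.filter fun a => x (e a) = true)).1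
    unfold wt
    rw [← Finset.card_map f.toEmbedding]
    congr 1
    ext j
    simp only [decide_eq_true_eq, Finset.mem_filter, Finset.mem_univ, true_and,
      Finset.mem_map_equiv]
  · rintro x ⟨i, j⟩ hij hx
    simp only [Finset.mem_filter, Finset.mem_univ, true_and] at hij
    simp only [decide_eq_false_iff_not]
    intro hb
    have := (hφ _).2 _ hb
    simp only [Finset.mem_filter, Finset.mem_univ, true_and] at this
    simp only at hx
    rw [hij, this] at hx
    exact absurd hx (by simp)

/-- Fractional Hall with capacities. -/
lemma fracHall {ι σ β : Type} [Fintype ι] [Fintype σ] [DecidableEq ι] [DecidableEq σ]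
    [DecidableEq β] (r : ι → Finset σ) (W : σ → Finset β) (g : ι → σ → ℚ)
    (hg : ∀ x s, 0 ≤ g x s)
    (hW : ∀ s s', s ≠ s' → Disjoint (W s) (W s'))
    (h1 : ∀ x, 1 ≤ ∑ s ∈ r x, g x s)
    (h2 : ∀ s, ∑ x ∈ Finset.univ.filter (fun x => s ∈ r x), g x s ≤ (W s).card) :
    ∃ φ : ι → β, Function.Injective φ ∧ ∀ x, ∃ s ∈ r x, φ x ∈ W s := by
  have key : ∀ A : Finset ι, A.card ≤ (A.biUnion fun x => (r x).biUnion W).card := by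
    intro A
    have e1 : (A.biUnion fun x => (r x).biUnion W) = (A.biUnion r).biUnion W := by
      rw [Finset.biUnion_biUnion]
    rw [e1, Finset.card_biUnion (fun s _ s' _ h => hW s s' h)]
    have : (A.card : ℚ) ≤ ∑ s ∈ A.biUnion r, ((W s).card : ℚ) := by
      calc (A.card : ℚ) = ∑ x ∈ A, (1 : ℚ) := by simp
        _ ≤ ∑ x ∈ A, ∑ s ∈ r x, g x s := Finset.sum_le_sum fun x _ => h1 x
        _ = ∑ s ∈ A.biUnion r, ∑ x ∈ A.filter (fun x => s ∈ r x), g x s := by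
          apply Finset.sum_comm'
          intro x s
          simp only [Finset.mem_filter, Finset.mem_biUnion]
          constructor
          · rintro ⟨a, b⟩
            exact ⟨⟨a, b⟩, x, a, b⟩
          · rintro ⟨a, _⟩
            exact a
        _ ≤ ∑ s ∈ A.biUnion r, ((W s).card : ℚ) := by
          refine Finset.sum_le_sum fun s _ => le_trans ?_ (h2 s)
          exact Finset.sum_le_sum_of_subset_of_nonneg
            (Finset.filter_subset_filter _ (Finset.subset_univ _)) (fun x _ _ => hg x s)
    exact_mod_cast this
  obtain ⟨φ, hi, hφ⟩ := (Finset.all_card_le_biUnion_card_iff_exists_injective _).1 key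
  refine ⟨φ, hi, fun x => ?_⟩
  simpa using hφ x

/-- Number of words of weight at most `w` with support type `(c,d)`. -/
def cap (w c d : ℕ) : ℕ :=
  ∑ e ∈ Finset.range (d + 1), d.choose e * (if c + d + e ≤ w then 2 ^ (d - e) else 0)

/-- Words with support exactly `(S, D)`. -/
def Wd {α γ : Type} [Fintype α] [Fintype γ] [DecidableEq α] [DecidableEq γ] (w : ℕ)
    (s : Finset α × Finset γ) : Finset (Finset α × Finset γ × Finset γ) :=
  Finset.univ.filter fun y => y.1 = s.1 ∧ y.2.1 ∪ y.2.2 = s.2 ∧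
    y.1.card + y.2.1.card + y.2.2.card ≤ w

lemma cap_le {α γ : Type} [Fintype α] [Fintype γ] [DecidableEq α] [DecidableEq γ] (w : ℕ)
    (s : Finset α × Finset γ) : cap w s.1.card s.2.card ≤ (Wd w s).card := by
  obtain ⟨S, D⟩ := s
  have e1 : cap w S.card D.card = ((D.powerset.filter fun E => S.card + D.card + E.card ≤ w).sigma
      fun E => (D \ E).powerset).card := by
    rw [Finset.card_sigma, Finset.sum_filter]
    unfold cap
    have := Finset.sum_powerset_apply_card (x := D)
      (fun e => if S.card + D.card + e ≤ w then 2 ^ (D.card - e) else 0)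
    simp only [smul_eq_mul] at this
    rw [← this]
    refine Finset.sum_congr rfl fun E hE => ?_
    rw [Finset.card_powerset, Finset.card_sdiff_of_subset (Finset.mem_powerset.1 hE)]
  simp only
  rw [e1]
  refine Finset.card_le_card_of_injOn (fun q => (S, q.1 ∪ q.2, D \ q.2)) ?_ ?_
  · rintro ⟨E, T⟩ h
    simp only [Finset.coe_sigma, Set.mem_sigma_iff, Finset.mem_coe, Finset.mem_filter,
      Finset.mem_powerset] at h
    obtain ⟨⟨hE, hc⟩, hT⟩ := h
    have hTD : T ⊆ D := hT.trans Finset.sdiff_subset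
    simp only [Wd, Finset.coe_filter, Finset.mem_univ, true_and, Set.mem_ofPred_eq]
    refine ⟨?_, ?_⟩
    · ext a
      have := @hE a
      have := @hTD a
      simp only [Finset.mem_union, Finset.mem_sdiff]
      tauto
    · have h3 := Finset.card_union_le E T
      have h4 := Finset.card_sdiff_of_subset hTD
      have h5 := Finset.card_le_card hTD
      omega
  · rintro ⟨E, T⟩ h ⟨E', T'⟩ h' heq
    simp only [Finset.coe_sigma, Set.mem_sigma_iff, Finset.mem_coe, Finset.mem_filter,
      Finset.mem_powerset] at h h'
    simp only [Prod.mk.injEq, true_and] at heq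
    obtain ⟨h1, h2⟩ := heq
    have hT : T = T' := by
      have a1 := Finset.sdiff_sdiff_eq_self (h.2.trans Finset.sdiff_subset)
      have a2 := Finset.sdiff_sdiff_eq_self (h'.2.trans Finset.sdiff_subset)
      rw [← a1, ← a2, h2]
    subst hT
    have hE : E = E' := by
      ext a
      have c1 := h.2
      have c2 := h'.2
      have b1 := @c1 a
      have b2 := @c2 a
      have b3 : a ∈ E ∪ T ↔ a ∈ E' ∪ T := by rw [h1]
      simp only [Finset.mem_union, Finset.mem_sdiff] at b1 b2 b3
      tauto
    subst hE
    rfl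

lemma sum_superset {α : Type} [Fintype α] [DecidableEq α] (S : Finset α) (f : ℕ → ℚ) :
    ∑ X ∈ Finset.univ.filter (fun X => S ⊆ X), f X.card =
      ∑ i ∈ Finset.range (Fintype.card α - S.card + 1),
        ((Fintype.card α - S.card).choose i : ℚ) * f (S.card + i) := by
  have := Finset.sum_powerset_apply_card (x := Sᶜ) (fun i => f (S.card + i))
  rw [Finset.card_compl] at this
  simp only [nsmul_eq_mul] at this
  rw [← this]
  refine Finset.sum_bij' (fun X _ => X \ S) (fun t _ => S ∪ t) ?_ ?_ ?_ ?_ ?_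
  · intro X _
    simp only [Finset.mem_powerset]
    intro a
    simp
  · intro t _
    simp
  · intro X hX
    simp only [Finset.mem_filter, Finset.mem_univ, true_and] at hX
    exact Finset.union_sdiff_of_subset hX
  · intro t ht
    simp only [Finset.mem_powerset] at ht
    ext a
    have := @ht a
    simp only [Finset.mem_sdiff, Finset.mem_union, Finset.mem_compl] at this ⊢
    tauto
  · intro X hX
    simp only [Finset.mem_filter, Finset.mem_univ, true_and] at hX
    have h3 := Finset.card_sdiff_add_card_eq_card hX
    congr 1
    omega

/-- Fractional weight from a flow table. -/
def gw (w : ℕ) (tab : List (ℕ × ℕ × ℕ × ℕ × ℕ)) (a b c d : ℕ) : ℚ :=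
  (((tab.filter fun t => t.1 == a && t.2.1 == b && t.2.2.1 == c && t.2.2.2.1 == d).map
    fun t => t.2.2.2.2).sum : ℕ) /
    ((w.choose a * (2 * w).choose b * a.choose c * b.choose d : ℕ) : ℚ)

def Cond1 (w : ℕ) (tab : List (ℕ × ℕ × ℕ × ℕ × ℕ)) : Prop :=
  ∀ a < w + 1, ∀ b < 2 * w + 1, 1 ≤ ∑ c ∈ Finset.range (a + 1),
    (a.choose c : ℚ) * ∑ d ∈ Finset.range (b + 1), (b.choose d : ℚ) * gw w tab a b c d

def Cond2 (w : ℕ) (tab : List (ℕ × ℕ × ℕ × ℕ × ℕ)) : Prop :=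
  ∀ c < w + 1, ∀ d < 2 * w + 1, ∑ i ∈ Finset.range (w - c + 1),
    ((w - c).choose i : ℚ) * ∑ j ∈ Finset.range (2 * w - d + 1),
      ((2 * w - d).choose j : ℚ) * gw w tab (c + i) (d + j) c d ≤ (cap w c d : ℚ)

instance (w : ℕ) (tab : List (ℕ × ℕ × ℕ × ℕ × ℕ)) : Decidable (Cond1 w tab) := by
  unfold Cond1
  infer_instance

instance (w : ℕ) (tab : List (ℕ × ℕ × ℕ × ℕ × ℕ)) : Decidable (Cond2 w tab) := by
  unfold Cond2
  infer_instance

lemma base (w : ℕ) (tab : List (ℕ × ℕ × ℕ × ℕ × ℕ)) (h1 : Cond1 w tab) (h2 : Cond2 w tab) :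
    Ex (Fin w ⊕ Fin (2 * w)) (Fin w ⊕ (Fin (2 * w) ⊕ Fin (2 * w))) w := by
  obtain ⟨φ, hi, hφ⟩ := fracHall (ι := Finset (Fin w) × Finset (Fin (2 * w)))
    (σ := Finset (Fin w) × Finset (Fin (2 * w)))
    (fun x => x.1.powerset ×ˢ x.2.powerset) (Wd w)
    (fun x s => gw w tab x.1.card x.2.card s.1.card s.2.card)
    (fun x s => by unfold gw; positivity)
    (by
      rintro ⟨S, D⟩ ⟨S', D'⟩ hne
      rw [Finset.disjoint_left]
      rintro ⟨T, P, Q⟩ ha hb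
      simp only [Wd, Finset.mem_filter, Finset.mem_univ, true_and] at ha hb
      apply hne
      rw [← ha.1, ← hb.1, ← ha.2.1, ← hb.2.1])
    (by
      rintro ⟨X, Y⟩
      have := h1 X.card (Nat.lt_succ_of_le (by simpa using X.card_le_univ)) Y.card
        (Nat.lt_succ_of_le (by simpa using Y.card_le_univ))
      refine this.trans (le_of_eq ?_)
      rw [Finset.sum_product]
      have e1 := Finset.sum_powerset_apply_card (x := X) (fun c => ∑ d ∈ Finset.range (Y.card + 1),
        (Y.card.choose d : ℚ) * gw w tab X.card Y.card c d)
      simp only [nsmul_eq_mul] at e1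
      rw [← e1]
      refine Finset.sum_congr rfl fun S _ => ?_
      have e2 := Finset.sum_powerset_apply_card (x := Y) (fun d => gw w tab X.card Y.card S.card d)
      simp only [nsmul_eq_mul] at e2
      rw [← e2])
    (by
      rintro ⟨S, D⟩
      have := h2 S.card (Nat.lt_succ_of_le (by simpa using S.card_le_univ)) D.card
        (Nat.lt_succ_of_le (by simpa using D.card_le_univ))
      refine le_trans (le_of_eq ?_) (this.trans (by exact_mod_cast cap_le w (S, D)))
      have e0 : (Finset.univ.filter fun x : Finset (Fin w) × Finset (Fin (2 * w)) =>
          (S, D) ∈ x.1.powerset ×ˢ x.2.powerset) =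
          (Finset.univ.filter fun X => S ⊆ X) ×ˢ (Finset.univ.filter fun Y => D ⊆ Y) := by
        ext ⟨X, Y⟩
        simp
      rw [e0, Finset.sum_product]
      have e1 := sum_superset S (fun a => ∑ j ∈ Finset.range (2 * w - D.card + 1),
        ((2 * w - D.card).choose j : ℚ) * gw w tab a (D.card + j) S.card D.card)
      rw [Fintype.card_fin] at e1
      rw [← e1]
      refine Finset.sum_congr rfl fun X _ => ?_
      have e2 := sum_superset D (fun b => gw w tab X.card b S.card D.card)
      rw [Fintype.card_fin] at e2
      rw [← e2])
  refine ⟨Sum.elim Sum.inl (Sum.elim Sum.inr Sum.inr),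
    fun X => (φ (X.toLeft, X.toRight)).1.disjSum
      ((φ (X.toLeft, X.toRight)).2.1.disjSum (φ (X.toLeft, X.toRight)).2.2), ?_, ?_⟩
  · intro X Y hXY
    have a1 := congrArg Finset.toLeft hXY
    have a2 := congrArg (fun z => z.toRight.toLeft) hXY
    have a3 := congrArg (fun z => z.toRight.toRight) hXY
    simp only [Finset.toLeft_disjSum, Finset.toRight_disjSum] at a1 a2 a3
    have := hi (Prod.ext a1 (Prod.ext a2 a3))
    simp only [Prod.mk.injEq] at this
    rw [← Finset.toLeft_disjSum_toRight (u := X), ← Finset.toLeft_disjSum_toRight (u := Y),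
      this.1, this.2]
  · intro X
    obtain ⟨⟨S, D⟩, hs, hy⟩ := hφ (X.toLeft, X.toRight)
    revert hy
    dsimp only
    generalize φ (X.toLeft, X.toRight) = y
    intro hy
    obtain ⟨T, P, Q⟩ := y
    simp only [Wd, Finset.mem_filter, Finset.mem_univ, true_and] at hy
    simp only [Finset.mem_product, Finset.mem_powerset] at hs
    obtain ⟨hT, hD, hc⟩ := hy
    subst hT
    subst hD
    refine ⟨?_, ?_⟩
    · simp only [Finset.card_disjSum]
      omega
    · rintro (b | b | b) hb
      · simpa using hs.1 (by simpa using hb)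
      · have hb : b ∈ P := by simpa using hb
        simpa using hs.2 (Finset.mem_union_left _ hb)
      · have hb : b ∈ Q := by simpa using hb
        simpa using hs.2 (Finset.mem_union_right _ hb)

def tab3 : List (ℕ × ℕ × ℕ × ℕ × ℕ) := [
  (0,0,0,0,1), (0,1,0,1,6), (0,2,0,1,12), (0,2,0,2,3), (0,3,0,2,20), (0,4,0,2,15),
  (0,5,0,2,6), (0,6,0,2,1), (1,0,1,0,3), (1,1,1,1,18), (1,2,0,2,45), (1,3,0,2,30),
  (1,3,0,3,30), (1,4,0,3,45), (1,5,0,3,18), (1,6,0,3,3), (2,0,2,0,3), (2,1,1,1,18),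
  (2,2,1,1,18), (2,2,1,2,27), (2,3,0,3,60), (2,4,0,3,4), (2,4,1,2,41), (2,5,1,2,18),
  (2,6,1,2,3), (3,0,3,0,1), (3,1,2,1,6), (3,2,1,2,15), (3,3,1,2,20), (3,4,1,2,15),
  (3,5,1,2,6), (3,6,1,2,1)]

def tab4 : List (ℕ × ℕ × ℕ × ℕ × ℕ) := [
  (0,0,0,0,1), (0,1,0,1,8), (0,2,0,1,16), (0,2,0,2,12), (0,3,0,2,56), (0,4,0,2,70),
  (0,5,0,2,56), (0,6,0,2,28), (0,7,0,2,8), (0,8,0,2,1), (1,0,1,0,4), (1,1,1,1,32),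
  (1,2,0,2,21), (1,2,1,1,64), (1,2,1,2,27), (1,3,0,3,224), (1,4,0,3,280), (1,5,0,3,224),
  (1,6,0,3,112), (1,7,0,3,32), (1,8,0,3,4), (2,0,2,0,6), (2,1,2,1,48), (2,2,1,2,168),
  (2,3,0,3,244), (2,3,1,2,92), (2,4,0,4,420), (2,5,0,4,336), (2,6,0,4,168), (2,7,0,4,48),
  (2,8,0,4,6), (3,0,3,0,4), (3,1,2,1,32), (3,2,1,2,112), (3,3,1,2,224), (3,4,0,4,142),
  (3,4,1,2,138), (3,5,1,2,135), (3,5,1,3,89), (3,6,1,3,112), (3,7,1,3,32), (3,8,1,3,4),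
  (4,0,4,0,1), (4,1,2,1,8), (4,2,2,1,28), (4,3,1,3,56), (4,4,1,3,70), (4,5,1,3,56),
  (4,6,1,3,28), (4,7,1,3,8), (4,8,1,3,1)]

def tab5 : List (ℕ × ℕ × ℕ × ℕ × ℕ) := [
  (0,0,0,0,1), (0,1,0,1,10), (0,2,0,1,20), (0,2,0,2,25), (0,3,0,2,120), (0,4,0,2,210),
  (0,5,0,2,50), (0,5,0,3,202), (0,6,0,3,210), (0,7,0,3,120), (0,8,0,3,45), (0,9,0,3,10),
  (0,10,0,3,1), (1,0,1,0,5), (1,1,1,1,50), (1,2,1,1,100), (1,2,1,2,125), (1,3,0,3,600),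
  (1,4,0,3,1050), (1,5,0,3,882), (1,5,0,4,378), (1,6,0,4,1050), (1,7,0,4,600), (1,8,0,4,225),
  (1,9,0,4,50), (1,10,0,4,5), (2,0,2,0,10), (2,1,2,1,100), (2,2,1,2,450), (2,3,1,2,1200),
  (2,4,0,4,2100), (2,5,0,4,2520), (2,6,0,4,2100), (2,7,0,4,1052), (2,7,0,5,148), (2,8,0,5,450),
  (2,9,0,5,100), (2,10,0,5,10), (3,0,3,0,10), (3,1,2,1,100), (3,2,1,2,250), (3,2,2,1,100),
  (3,2,2,2,100), (3,3,1,3,1200), (3,4,1,3,2100), (3,5,0,5,2520), (3,6,0,5,2100), (3,7,0,5,1200),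
  (3,8,0,5,450), (3,9,0,5,100), (3,10,0,5,10), (4,0,4,0,5), (4,1,3,1,50), (4,2,2,2,225),
  (4,3,1,3,600), (4,4,1,3,1050), (4,5,0,5,976), (4,5,1,3,284), (4,6,1,3,1050), (4,7,1,3,600),
  (4,8,1,3,225), (4,9,1,3,50), (4,10,1,3,5), (5,0,5,0,1), (5,1,3,1,10), (5,2,2,2,45),
  (5,3,1,3,120), (5,4,1,3,210), (5,5,1,3,252), (5,6,1,3,210), (5,7,1,3,120), (5,8,1,3,45),
  (5,9,1,3,10), (5,10,1,3,1)]

lemma base3 : Ex (Fin 3 ⊕ Fin (2 * 3)) (Fin 3 ⊕ (Fin (2 * 3) ⊕ Fin (2 * 3))) 3 :=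
  base 3 tab3 (by decide +kernel) (by decide +kernel)

lemma base4 : Ex (Fin 4 ⊕ Fin (2 * 4)) (Fin 4 ⊕ (Fin (2 * 4) ⊕ Fin (2 * 4))) 4 :=
  base 4 tab4 (by decide +kernel) (by decide +kernel)

lemma base5 : Ex (Fin 5 ⊕ Fin (2 * 5)) (Fin 5 ⊕ (Fin (2 * 5) ⊕ Fin (2 * 5))) 5 :=
  base 5 tab5 (by decide +kernel) (by decide +kernel)

lemma allEx (k : ℕ) : ∀ w, (w = 3 ∨ w = 4 ∨ w = 5) → ∃ (A B : Type) (_ : Fintype A) (_ : Fintype B),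
    Fintype.card A = 3 * (w + 3 * k) ∧ Fintype.card B = 5 * (w + 3 * k) ∧ Ex A B (w + 3 * k) := by
  intro w hw
  induction k with
  | zero =>
    rcases hw with rfl | rfl | rfl
    · exact ⟨_, _, inferInstance, inferInstance, by simp, by simp, base3⟩
    · exact ⟨_, _, inferInstance, inferInstance, by simp, by simp, base4⟩
    · exact ⟨_, _, inferInstance, inferInstance, by simp, by simp, base5⟩
  | succ k ih =>
    obtain ⟨A, B, _, _, hA, hB, h⟩ := ih
    refine ⟨_, _, inferInstance, inferInstance, ?_, ?_, h.sum base3⟩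
    · rw [Fintype.card_sum, hA]
      simp
      ring
    · rw [Fintype.card_sum, hB]
      simp
      ring

/-- For every w ≥ 3, there exists a (3w, 5w, w)-domination mapping. -/
theorem stmt_8 (w : ℕ) (hw : 3 ≤ w) : ExistsDomMap (3 * w) (5 * w) w := by
  obtain ⟨w₀, k, h0, rfl⟩ : ∃ w₀ k, (w₀ = 3 ∨ w₀ = 4 ∨ w₀ = 5) ∧ w = w₀ + 3 * k :=
    ⟨3 + (w - 3) % 3, (w - 3) / 3, by omega, by omega⟩
  obtain ⟨A, B, _, _, hA, hB, h⟩ := allEx k w₀ h0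
  exact h.exists hA hB
end

section
/- For all integers w ≥ 3 and all m with w ≤ m ≤ 3w, ν(m,w) = 2m − w, where ν(m,w) denotes the minimum n for which an (m,n,w)-domination mapping exists. -/
/-! Blocks: a block word on the left is a number below 8, on the right a number below 32. -/

def wN (k : ℕ) : ℕ :=
  (k.testBit 0).toNat + (k.testBit 1).toNat + (k.testBit 2).toNat + (k.testBit 3).toNat +
    (k.testBit 4).toNat

def dN (x y : ℕ) : Bool :=
  (!y.testBit 0 || x.testBit 0) && (!y.testBit 1 || x.testBit 1) && (!y.testBit 2 || x.testBit 1) &&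
    (!y.testBit 3 || x.testBit 2) && (!y.testBit 4 || x.testBit 2)

def tabT : ℕ := 0x7001600490128004600c404600a20000d004c01090540014102820a800d000013010c0510102805020a0422202120011802120a1012080a020c042a002500001a003204500c2004420882144024800051044408180c10088420820c8014800414080c0c082c0010242802282030200c012402380034002801140444013000000e00380068088800a10260106010a0001900d00211094008420a4010c01140010502180821112008030b002201290002030814101111081202120423003100001c00980850109010221082108128800086080a20112810104210442840304008302006100930081021280430012800100a18022808301030023004480050000015008a018102280142202220a02280004301c002502090024105042440218000230230221022080601402241014120020a22042600210822022102420122000026008c2009204804052024240124200085200a204120c02042404240812080041140122410402824044402200124002005400a24084008400340024000440000540106018820500124022221402060004a02842018208802812084224040c0010a201420304030202140244021210021044006211041082101410241004200002520122028404820812044404120400094400c40184050200340444040408040094014401120104005200420204020200c20002008401020024004400160000029002c006101900144022409200860009101820248049000c108441101118002060122043011100a010e00122016000103040c090110180904130015000a0000700062084808280822080608811420008304c008901048104108c00c4008800409081214081410100514020801140004030c021c001008140110020c001000002a00a201a002900841030408a01240004501840209090802c009801a0012800205020c0a081030090210061900090009101014120112101102110411001200081100921088180808241084188008400809100c1050184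010031804104010800805101218100810182008040820102018010800080810100802100410011800000b01120130044801210160068005200058021404410610024405800640014000340418050106200602060401010500040a060805080110070001020200060000c800a4048804a000c204240041044004120482048100500484004200800480042804220009002800030022042104200406000a04080410040204040401040000310114014802a000e0030202210180008902420150028803400380024002800111030803100210032002020120022003010100010802080104020402010300006400a800b0008800020082006000a0005200400090004800440084008100c000080012001000300004002400210020000c0014001100180005000600010000

def tabU : ℕ := 0x5c00170234013801b00168027004b001a10261030602a405c002a10a6009a0018500c30198028c0588030905180690028502830542054406410a410d800e400115011a021a0512042905280b100a280426050309220b040d200e2015201a20020702150708061405110a090e080d100e0206050e0412060e0115011e001d0000720071046208a8048900a90c48086804a408e00c420c240c410c6014a014c000ca00c9088a080e085808c80c900c880c0508c210860c84144118811c401c80040d04190c120c0a0c110c30143018180c2110071422142414211c202c203420040b080d140c140a0c0914111c101c080c0314051c021c041c012c01000000000033003600ac009a00b1023108b0099000e201c10942086208c108a10b8011a00194005a02540186089101d00a880a50088508c40a820a840b010ac0134013800125003c0838082c0a210a300b081128090511030b021124132019201b002320090a09030a140a1211091111190811180a050a03190219041a0119012b003300004d0027083208520870085110381068006508451064106218411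06110e01860080b0819084a08941089109110d0109810851083104610c2284118c028c030c0082a0816102a1032181110311830281810231025180628222821302100000000100b1015101a180a2809101930183808180318052806300600000000000000000096009501c8001e014901a802a8035001e001a204a201620541058121c021a00146008e01c20548025804510158064803810342068205842281218122c024c0021c000f050c061220190530212822300321030322222122222121212520262005090505060c050a221821092508230821052205230223042501260100000000002b00990464048a2031044920d020a8046104832026206420c12421246024a00413044a044c2052240920982448245020852045244224442441248100000000042c0434202a040e241124182428243020252405240624220000000000000000001b2403240a240c401944090000000040074403000000000000000000000000006a00a500d2015202380191206820b000e101a402a2206220a120e02160226000cc0154204c02522091204921182148208320c421442142214122412340238001190126202c20342111203821302228030521032106212423014121000000000213010e210a020e221122092310411822062203410642060000000000000000009c0066204a203220612029207020c82007202320a420a2406140a100000000004b2015201c201a2051208900d8205820432046208620c200000000000000002013200b200e2016402940310000000040234025000000000000000000000000400b200d000000000000000000000000000000000000000000000000000000000069005300aa018a017001510268034801230226026202640560068109600aa0008d0192028a028602d002910650068801c402c40642058209c00a810b400d400116012c05060514043106180c280928060306210a240a2211210d0116201700030c020d0906090c0a180a110d080e100a060d040d0211060f00160100000000006300a3048604460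84908290c5008d008a408260c0608a20cc00c8114600ca000c60445088c048c0889049108981058084308460c820c4410c1148100000000001d042a0c14081c140910291828142804250c2210261824000000000000000008150415100e0c0c14180c1800000000140314060000000000000000000000000056007400b200b401310189098809500143024309840982098109410b20116000d1004e024c0246090909480a480a90094408860a440a421181114111c012c0010d011c09140312091809301218113009210223112209241221130100000000091202190a0c0a0a091112091308131011051203130213040000000000000000003a0055085408340861083110a8107008230883086410a218a010a100000000084c0807081a08921051104910c818481045104310c4184200000000000000000813100d101c102c180918210000000018220825000000000000000000000000101310160000000000000000000000000000000000000000000000000000000000870039018c0134025102290470043800e4016102e00524066006a006c005a0014a01830292021602490311059005500382024506440684074007800000000001290232022c05220609063007200628060605210624062200000000000000000113020b0702060a061107100000000007040701000000000000000000000000008b009304580454046804c104c804a8048504a104e004c400000000000000000452004704940492049804d000000000044304c20000000000000000000000000407042304160432000000000000000000000000000000000000000000000000041c041a00000000000000000000000000000000000000000000000000000000006c003501320164005900b802c802b00107022503600344034103a000000000014c01450294024a028902980388039002c102c2038403c00000000000000000010b012a022a0318033003280000000003220324000000000000000000000000030a031400000000000000000000000000000000000000000000000000000000002e002d00a6007800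e800f0000000000000000000000000000000000000000000d400c50000000000000000000000000000000000000000000000000000000000000000000000000000000000000000000000000000000000000000000000000000000000000000000000000000000000000000000000000000000000000000


def codeT (k : ℕ) : ℕ := (tabT >>> (16 * k)) % 32768
def codeU (k : ℕ) : ℕ := (tabU >>> (16 * k)) % 32768

def wC (c : ℕ) : ℕ := wN (c % 32) + wN (c / 32 % 32) + wN (c / 1024 % 32)
def dC (k c : ℕ) : Bool :=
  dN (k % 8) (c % 32) && dN (k / 8 % 8) (c / 32 % 32) && dN (k / 64 % 8) (c / 1024 % 32)

def okU (k : ℕ) : Bool := (wC (codeT (k / 2)) == 3) && !(k / 2 == 73)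

def chk (f : ℕ → ℕ) (v : ℕ → Bool) : ℕ → ℕ → Bool
  | 0, _ => true
  | _ + 1, 0 => false
  | n + 1, m + 1 =>
    bif v n then !(Nat.testBit (m + 1) (f n)) && chk f v n ((m + 1) ||| (1 <<< f n))
    else chk f v n (m + 1)

theorem chk_sound (f : ℕ → ℕ) (v : ℕ → Bool) (n : ℕ) : ∀ m, chk f v n m = true →
    (∀ k < n, v k = true → m.testBit (f k) = false) ∧
    (∀ k < n, ∀ j < k, v k = true → v j = true → f j ≠ f k) := by
  induction n with
  | zero => intro m _; simp
  | succ n ih =>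
    intro m h
    rcases m with _ | m
    · simp [chk] at h
    · cases hv : v n with
      | false =>
        simp only [chk, hv, cond_false] at h
        obtain ⟨h1, h2⟩ := ih _ h
        refine ⟨fun k hk hvk => ?_, fun k hk j hj hvk hvj => ?_⟩
        · rcases Nat.lt_succ_iff_lt_or_eq.1 hk with hk | rfl
          · exact h1 k hk hvk
          · simp [hv] at hvk
        · rcases Nat.lt_succ_iff_lt_or_eq.1 hk with hk | rfl
          · exact h2 k hk j hj hvk hvj
          · simp [hv] at hvk
      | true =>
        simp only [chk, hv, cond_true, Bool.and_eq_true, Bool.not_eq_true'] at h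
        obtain ⟨h0, h⟩ := h
        obtain ⟨h1, h2⟩ := ih _ h
        refine ⟨fun k hk hvk => ?_, fun k hk j hj hvk hvj => ?_⟩
        · rcases Nat.lt_succ_iff_lt_or_eq.1 hk with hk | rfl
          · have := h1 k hk hvk
            rw [Nat.testBit_or, Bool.or_eq_false_iff] at this
            exact this.1
          · exact h0
        · rcases Nat.lt_succ_iff_lt_or_eq.1 hk with hk | rfl
          · exact h2 k hk j hj hvk hvj
          · intro he
            have := h1 j hj hvj
            rw [Nat.testBit_or, Bool.or_eq_false_iff, he] at this
            simp [Nat.testBit_shiftLeft] at this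

theorem chk_inj (f : ℕ → ℕ) (v : ℕ → Bool) (n m : ℕ) (h : chk f v n m = true)
    (j k : ℕ) (hj : j < n) (hk : k < n) (vj : v j = true) (vk : v k = true) (he : f j = f k) :
    j = k := by
  have h2 := (chk_sound f v n m h).2
  rcases lt_trichotomy j k with hl | hl | hl
  · exact absurd he (h2 k hk j hl vk vj)
  · exact hl
  · exact absurd he.symm (h2 j hj k hl vj vk)

theorem chkT : chk codeT (fun _ => true) 512 (1 <<< 32768) = true := by decide +kernel
theorem chkU : chk codeU okU 1024 (1 <<< 32768) = true := by decide +kernel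
theorem okT1 : ∀ k < 512, wC (codeT k) ≤ 3 ∧ dC k (codeT k) = true := by decide +kernel
theorem okU1 : ∀ k < 1024, okU k = true → wC (codeU k) = 4 ∧ dC (k / 2) (codeU k) = true := by
  decide +kernel

/-- The inductive package. -/
def Pack (X Y : Type) (W : Y → ℕ) (D : X → Y → Prop) (w : ℕ) : Prop :=
  ∃ (φ : X → Y) (ψ : X → Bool → Y) (V : Set X) (χ : X → Y),
    Function.Injective φ ∧ (∀ x, W (φ x) ≤ w) ∧ (∀ x, D x (φ x)) ∧
    (∀ x i, W (φ x) = w → x ∉ V → W (ψ x i) = w + 1 ∧ D x (ψ x i)) ∧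
    (∀ x i x' i', W (φ x) = w → x ∉ V → W (φ x') = w → x' ∉ V → ψ x i = ψ x' i' →
      x = x' ∧ i = i') ∧
    (∀ x ∈ V, W (χ x) + 2 ≤ w ∧ D x (χ x)) ∧
    (∀ x ∈ V, ∀ x' ∈ V, χ x = χ x' → x = x')

theorem Pack.transport {X Y X' Y' : Type} {W : Y → ℕ} {D : X → Y → Prop} {W' : Y' → ℕ}
    {D' : X' → Y' → Prop} {w : ℕ} (h : Pack X Y W D w) (e : X' ≃ X) (f : Y ≃ Y')
    (hW : ∀ y, W' (f y) = W y) (hD : ∀ x y, D (e x) y → D' x (f y)) : Pack X' Y' W' D' w := by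
  obtain ⟨φ, ψ, V, χ, h1, h2, h3, h4, h5, h6, h7⟩ := h
  refine ⟨fun x => f (φ (e x)), fun x i => f (ψ (e x) i), {x | e x ∈ V}, fun x => f (χ (e x)),
    ?_, ?_, ?_, ?_, ?_, ?_, ?_⟩
  · exact f.injective.comp (h1.comp e.injective)
  · intro x; rw [hW]; exact h2 _
  · intro x; exact hD _ _ (h3 _)
  · intro x i hx hV
    rw [hW] at hx ⊢
    exact ⟨(h4 _ i hx hV).1, hD _ _ (h4 _ i hx hV).2⟩
  · intro x i x' i' hx hV hx' hV' he
    rw [hW] at hx hx'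
    obtain ⟨ha, hb⟩ := h5 _ i _ i' hx hV hx' hV' (f.injective he)
    exact ⟨e.injective ha, hb⟩
  · intro x hx
    rw [hW]
    exact ⟨(h6 _ hx).1, hD _ _ (h6 _ hx).2⟩
  · intro x hx x' hx' he
    exact e.injective (h7 _ hx _ hx' (f.injective he))

def cc : Fin 8 → Fin 32 := ![0, 1, 2, 4, 8, 16, 0, 0]
def d0 : Fin 8 → Fin 32 := ![0, 0, 0, 0, 0, 0, 6, 3]
def dd : Fin 8 → Bool → Fin 32
  | a, false => (![0, 0, 0, 0, 0, 0, 10, 5] : Fin 8 → Fin 32) a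
  | a, true => (![0, 0, 0, 0, 0, 0, 18, 9] : Fin 8 → Fin 32) a
def ee : Fin 8 → Bool → Fin 32
  | a, false => (![0, 0, 0, 0, 0, 0, 14, 7] : Fin 8 → Fin 32) a
  | a, true => (![0, 0, 0, 0, 0, 0, 22, 11] : Fin 8 → Fin 32) a

abbrev Bad (a : Fin 8) : Prop := 6 ≤ a

theorem cc_inj : ∀ a b, ¬ Bad a → ¬ Bad b → cc a = cc b → a = b := by decide
theorem cc_w : ∀ a, wN (cc a) ≤ 1 := by decide
theorem cc_w1 : ∀ a, ¬ Bad a → a ≠ 0 → wN (cc a) = 1 := by decide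
theorem cc_w0 : wN (cc 0) = 0 := by decide
theorem cc_d : ∀ a : Fin 8, dN a (cc a) = true := by decide
theorem d0_inj : ∀ a b, Bad a → Bad b → d0 a = d0 b → a = b := by decide
theorem d0_w : ∀ a, Bad a → wN (d0 a) = 2 := by decide
theorem d0_d : ∀ a : Fin 8, dN a (d0 a) = true := by decide
theorem dd_inj : ∀ a b, Bad a → Bad b → ∀ i j, dd a i = dd b j → a = b ∧ i = j := by decide
theorem dd_w : ∀ a, Bad a → ∀ i, wN (dd a i) = 2 := by decide
theorem dd_d : ∀ (a : Fin 8) i, dN a (dd a i) = true := by decide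
theorem ee_inj : ∀ a b, Bad a → Bad b → ∀ i j, ee a i = ee b j → a = b ∧ i = j := by decide
theorem ee_w : ∀ a, Bad a → ∀ i, wN (ee a i) = 3 := by decide
theorem ee_d : ∀ (a : Fin 8) i, dN a (ee a i) = true := by decide
theorem zz_d : ∀ a : Fin 8, dN a ((0 : Fin 32) : ℕ) = true := by decide
theorem zz_w : wN ((0 : Fin 32) : ℕ) = 0 := by decide
theorem cd0 : ∀ a b, ¬ Bad a → Bad b → cc a ≠ d0 b := by decide
theorem cdd : ∀ a b, ¬ Bad a → Bad b → ∀ i, cc a ≠ dd b i := by decide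
theorem cee : ∀ a b, ¬ Bad a → Bad b → ∀ i, cc a ≠ ee b i := by decide
theorem d0dd : ∀ a b, Bad a → Bad b → ∀ i, d0 a ≠ dd b i := by decide
theorem d0z : ∀ a, Bad a → d0 a ≠ 0 := by decide
theorem ddz : ∀ a, Bad a → ∀ i, dd a i ≠ 0 := by decide
theorem eedd : ∀ a b, Bad a → Bad b → ∀ i j, ee a i ≠ dd b j := by decide
theorem seven : ∀ a b : Fin 8, Bad a → Bad b → decide (a = 7) = decide (b = 7) → a = b := by
  decide

set_option maxHeartbeats 1000000 in
theorem Pack.step {X Y : Type} {W : Y → ℕ} {D : X → Y → Prop} {w : ℕ} (h : Pack X Y W D w) :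
    Pack (Fin 8 × X) (Fin 32 × Y) (fun y => wN y.1 + W y.2)
      (fun x y => dN x.1 y.1 = true ∧ D x.2 y.2) (w + 1) := by
  classical
  obtain ⟨φ, ψ, V, χ, h1, h2, h3, h4, h5, h6, h7⟩ := h
  obtain ⟨Φ, hΦ⟩ : ∃ Φ : Fin 8 × X → Fin 32 × Y, Φ = fun p =>
    if ¬ Bad p.1 then (cc p.1, φ p.2) else
    if W (φ p.2) < w then (d0 p.1, φ p.2) else
    if p.2 ∈ V then (dd p.1 false, χ p.2) else (0, ψ p.2 (decide (p.1 = 7))) := ⟨_, rfl⟩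
  obtain ⟨Ψ, hΨ⟩ : ∃ Ψ : Fin 8 × X → Bool → Fin 32 × Y, Ψ = fun p i =>
    if ¬ Bad p.1 then (cc p.1, ψ p.2 i) else
    if W (φ p.2) < w then (ee p.1 i, φ p.2) else (dd p.1 i, φ p.2) := ⟨_, rfl⟩
  have F1 : ∀ a x, ¬ Bad a → Φ (a, x) = (cc a, φ x) := by
    intro a x ha; simp only [hΦ]; rw [if_pos ha]
  have F2 : ∀ a x, Bad a → W (φ x) < w → Φ (a, x) = (d0 a, φ x) := by
    intro a x ha hx; simp only [hΦ]; rw [if_neg (not_not.2 ha), if_pos hx]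
  have F3 : ∀ a x, Bad a → ¬ W (φ x) < w → x ∈ V → Φ (a, x) = (dd a false, χ x) := by
    intro a x ha hx hv; simp only [hΦ]; rw [if_neg (not_not.2 ha), if_neg hx, if_pos hv]
  have F4 : ∀ a x, Bad a → ¬ W (φ x) < w → x ∉ V → Φ (a, x) = (0, ψ x (decide (a = 7))) := by
    intro a x ha hx hv; simp only [hΦ]; rw [if_neg (not_not.2 ha), if_neg hx, if_neg hv]
  have G1 : ∀ a x i, ¬ Bad a → Ψ (a, x) i = (cc a, ψ x i) := by
    intro a x i ha; simp only [hΨ]; rw [if_pos ha]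
  have G2 : ∀ a x i, Bad a → W (φ x) < w → Ψ (a, x) i = (ee a i, φ x) := by
    intro a x i ha hx; simp only [hΨ]; rw [if_neg (not_not.2 ha), if_pos hx]
  have G3 : ∀ a x i, Bad a → ¬ W (φ x) < w → Ψ (a, x) i = (dd a i, φ x) := by
    intro a x i ha hx; simp only [hΨ]; rw [if_neg (not_not.2 ha), if_neg hx]
  clear hΦ hΨ
  have eqw : ∀ x, ¬ W (φ x) < w → W (φ x) = w := fun x hx => le_antisymm (h2 x) (not_lt.1 hx)
  -- classification of the words that need the second map
  have K : ∀ a x, wN (Φ (a, x)).1 + W (Φ (a, x)).2 = w + 1 →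
      (a, x) ∉ {p : Fin 8 × X | ¬ Bad p.1 ∧ p.1 ≠ 0 ∧ p.2 ∈ V} →
      (¬ Bad a ∧ a ≠ 0 ∧ W (φ x) = w ∧ x ∉ V) ∨ (Bad a ∧ W (φ x) < w ∧ W (φ x) + 1 = w) ∨
      (Bad a ∧ ¬ W (φ x) < w ∧ W (φ x) = w) := by
    intro a x hW hV
    by_cases ha : Bad a
    · by_cases hx : W (φ x) < w
      · rw [F2 a x ha hx] at hW
        have := d0_w a ha
        simp only at hW
        exact Or.inr (Or.inl ⟨ha, hx, by omega⟩)
      · exact Or.inr (Or.inr ⟨ha, hx, eqw x hx⟩)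
    · rw [F1 a x ha] at hW
      simp only at hW
      have hb := h2 x
      have ha0 : a ≠ 0 := by
        rintro rfl
        rw [cc_w0] at hW
        omega
      have := cc_w1 a ha ha0
      refine Or.inl ⟨ha, ha0, by omega, fun hv => hV ⟨ha, ha0, hv⟩⟩
  refine ⟨Φ, Ψ, {p | ¬ Bad p.1 ∧ p.1 ≠ 0 ∧ p.2 ∈ V}, fun p => (cc p.1, χ p.2),
    ?_, ?_, ?_, ?_, ?_, ?_, ?_⟩
  · -- injectivity
    have key : ∀ x b y, Bad b → ¬ W (φ y) < w → y ∉ V → φ x ≠ ψ y (decide (b = 7)) := by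
      intro x b y hb hy hv he
      have := (h4 y (decide (b = 7)) (eqw y hy) hv).1
      have := h2 x
      rw [he] at this
      omega
    rintro ⟨a, x⟩ ⟨b, y⟩ he
    by_cases ha : Bad a
    · by_cases hx : W (φ x) < w
      · rw [F2 a x ha hx] at he
        by_cases hb : Bad b
        · by_cases hy : W (φ y) < w
          · rw [F2 b y hb hy, Prod.mk.injEq] at he
            rw [d0_inj a b ha hb he.1, h1 he.2]
          · by_cases hv : y ∈ V
            · rw [F3 b y hb hy hv, Prod.mk.injEq] at he
              exact absurd he.1 (d0dd a b ha hb _)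
            · rw [F4 b y hb hy hv, Prod.mk.injEq] at he
              exact absurd he.1 (d0z a ha)
        · rw [F1 b y hb, Prod.mk.injEq] at he
          exact absurd he.1.symm (cd0 b a hb ha)
      · by_cases hu : x ∈ V
        · rw [F3 a x ha hx hu] at he
          by_cases hb : Bad b
          · by_cases hy : W (φ y) < w
            · rw [F2 b y hb hy, Prod.mk.injEq] at he
              exact absurd he.1.symm (d0dd b a hb ha _)
            · by_cases hv : y ∈ V
              · rw [F3 b y hb hy hv, Prod.mk.injEq] at he
                rw [(dd_inj a b ha hb _ _ he.1).1, h7 x hu y hv he.2]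
              · rw [F4 b y hb hy hv, Prod.mk.injEq] at he
                exact absurd he.1 (ddz a ha _)
          · rw [F1 b y hb, Prod.mk.injEq] at he
            exact absurd he.1.symm (cdd b a hb ha _)
        · rw [F4 a x ha hx hu] at he
          by_cases hb : Bad b
          · by_cases hy : W (φ y) < w
            · rw [F2 b y hb hy, Prod.mk.injEq] at he
              exact absurd he.1.symm (d0z b hb)
            · by_cases hv : y ∈ V
              · rw [F3 b y hb hy hv, Prod.mk.injEq] at he
                exact absurd he.1.symm (ddz b hb _)
              · rw [F4 b y hb hy hv, Prod.mk.injEq] at he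
                obtain ⟨hxy, hi⟩ := h5 x _ y _ (eqw x hx) hu (eqw y hy) hv he.2
                rw [hxy, seven a b ha hb hi]
          · rw [F1 b y hb, Prod.mk.injEq] at he
            exact absurd he.2.symm (key y a x ha hx hu)
    · rw [F1 a x ha] at he
      by_cases hb : Bad b
      · by_cases hy : W (φ y) < w
        · rw [F2 b y hb hy, Prod.mk.injEq] at he
          exact absurd he.1 (cd0 a b ha hb)
        · by_cases hv : y ∈ V
          · rw [F3 b y hb hy hv, Prod.mk.injEq] at he
            exact absurd he.1 (cdd a b ha hb _)
          · rw [F4 b y hb hy hv, Prod.mk.injEq] at he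
            exact absurd he.2 (key x b y hb hy hv)
      · rw [F1 b y hb, Prod.mk.injEq] at he
        rw [cc_inj a b ha hb he.1, h1 he.2]
  · rintro ⟨a, x⟩
    have hx2 := h2 x
    by_cases ha : Bad a
    · by_cases hx : W (φ x) < w
      · rw [F2 a x ha hx]
        have := d0_w a ha
        simp only
        omega
      · by_cases hu : x ∈ V
        · rw [F3 a x ha hx hu]
          have := dd_w a ha false
          have := (h6 x hu).1
          simp only
          omega
        · rw [F4 a x ha hx hu]
          have := (h4 x (decide (a = 7)) (eqw x hx) hu).1
          simp only [zz_w]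
          omega
    · rw [F1 a x ha]
      have := cc_w a
      simp only
      omega
  · rintro ⟨a, x⟩
    by_cases ha : Bad a
    · by_cases hx : W (φ x) < w
      · rw [F2 a x ha hx]
        exact ⟨d0_d a, h3 x⟩
      · by_cases hu : x ∈ V
        · rw [F3 a x ha hx hu]
          exact ⟨dd_d a _, (h6 x hu).2⟩
        · rw [F4 a x ha hx hu]
          exact ⟨zz_d a, (h4 x _ (eqw x hx) hu).2⟩
    · rw [F1 a x ha]
      exact ⟨cc_d a, h3 x⟩
  · rintro ⟨a, x⟩ i hW hV
    rcases K a x hW hV with ⟨ha, ha0, hx, hv⟩ | ⟨ha, hx, hx'⟩ | ⟨ha, hx, hx'⟩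
    · rw [G1 a x i ha]
      have := h4 x i hx hv
      have h11 := cc_w1 a ha ha0
      refine ⟨?_, cc_d a, this.2⟩
      simp only
      omega
    · rw [G2 a x i ha hx]
      have h11 := ee_w a ha i
      refine ⟨?_, ee_d a i, h3 x⟩
      simp only
      omega
    · rw [G3 a x i ha hx]
      have h11 := dd_w a ha i
      refine ⟨?_, dd_d a i, h3 x⟩
      simp only
      omega
  · rintro ⟨a, x⟩ i ⟨b, y⟩ j hW hV hW' hV' he
    rcases K a x hW hV with ⟨ha, ha0, hx, hv⟩ | ⟨ha, hx, hx'⟩ | ⟨ha, hx, hx'⟩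
    · rw [G1 a x i ha] at he
      rcases K b y hW' hV' with ⟨hb, hb0, hy, hv'⟩ | ⟨hb, hy, hy'⟩ | ⟨hb, hy, hy'⟩
      · rw [G1 b y j hb, Prod.mk.injEq] at he
        obtain ⟨hxy, hi⟩ := h5 x i y j hx hv hy hv' he.2
        rw [cc_inj a b ha hb he.1, hxy]
        exact ⟨rfl, hi⟩
      · rw [G2 b y j hb hy, Prod.mk.injEq] at he
        exact absurd he.1 (cee a b ha hb _)
      · rw [G3 b y j hb hy, Prod.mk.injEq] at he
        exact absurd he.1 (cdd a b ha hb _)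
    · rw [G2 a x i ha hx] at he
      rcases K b y hW' hV' with ⟨hb, hb0, hy, hv'⟩ | ⟨hb, hy, hy'⟩ | ⟨hb, hy, hy'⟩
      · rw [G1 b y j hb, Prod.mk.injEq] at he
        exact absurd he.1.symm (cee b a hb ha _)
      · rw [G2 b y j hb hy, Prod.mk.injEq] at he
        obtain ⟨hab, hi⟩ := ee_inj a b ha hb i j he.1
        rw [hab, h1 he.2]
        exact ⟨rfl, hi⟩
      · rw [G3 b y j hb hy, Prod.mk.injEq] at he
        exact absurd he.1 (eedd a b ha hb _ _)
    · rw [G3 a x i ha hx] at he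
      rcases K b y hW' hV' with ⟨hb, hb0, hy, hv'⟩ | ⟨hb, hy, hy'⟩ | ⟨hb, hy, hy'⟩
      · rw [G1 b y j hb, Prod.mk.injEq] at he
        exact absurd he.1.symm (cdd b a hb ha _)
      · rw [G2 b y j hb hy, Prod.mk.injEq] at he
        exact absurd he.1.symm (eedd b a hb ha _ _)
      · rw [G3 b y j hb hy, Prod.mk.injEq] at he
        obtain ⟨hab, hi⟩ := dd_inj a b ha hb i j he.1
        rw [hab, h1 he.2]
        exact ⟨rfl, hi⟩
  · rintro ⟨a, x⟩ ⟨ha, ha0, hv⟩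
    have := h6 x hv
    have h11 := cc_w1 a ha ha0
    refine ⟨?_, cc_d a, this.2⟩
    simp only at h11 ⊢
    omega
  · rintro ⟨a, x⟩ ⟨ha, ha0, hv⟩ ⟨b, y⟩ ⟨hb, hb0, hv'⟩ he
    rw [Prod.mk.injEq] at he
    rw [cc_inj a b ha hb he.1, h7 x hv y hv' he.2]

/-- Block words. -/
def bW (w : ℕ) (y : Fin w → Fin 32) : ℕ := ∑ i, wN (y i)
def bD (w : ℕ) (x : Fin w → Fin 8) (y : Fin w → Fin 32) : Prop := ∀ i, dN (x i) (y i) = true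

def idx (x : Fin 3 → Fin 8) : ℕ := x 0 + 8 * (x 1 : ℕ) + 64 * (x 2 : ℕ)
def blk (c : ℕ) : Fin 3 → Fin 32 :=
  ![⟨c % 32, Nat.mod_lt _ (by norm_num)⟩, ⟨c / 32 % 32, Nat.mod_lt _ (by norm_num)⟩,
    ⟨c / 1024 % 32, Nat.mod_lt _ (by norm_num)⟩]

theorem blk_inj {c c' : ℕ} (h : c < 32768) (h' : c' < 32768) (he : blk c = blk c') : c = c' := by
  have e0 := congrArg Fin.val (congrFun he 0)
  have e1 := congrArg Fin.val (congrFun he 1)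
  have e2 := congrArg Fin.val (congrFun he 2)
  simp [blk] at e0 e1 e2
  omega

theorem blk_W (c : ℕ) : bW 3 (blk c) = wC c := by
  simp [bW, Fin.sum_univ_three, blk, wC]

theorem idx_lt (x : Fin 3 → Fin 8) : idx x < 512 := by
  unfold idx; omega

theorem idx_inj {x y : Fin 3 → Fin 8} (h : idx x = idx y) : x = y := by
  unfold idx at h
  funext i
  fin_cases i <;> apply Fin.ext <;> simp <;> omega

theorem blk_D (x : Fin 3 → Fin 8) (c : ℕ) (h : dC (idx x) c = true) : bD 3 x (blk c) := by
  have e0 : idx x % 8 = x 0 := by unfold idx; omega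
  have e1 : idx x / 8 % 8 = x 1 := by unfold idx; omega
  have e2 : idx x / 64 % 8 = x 2 := by unfold idx; omega
  simp only [dC, e0, e1, e2, Bool.and_eq_true] at h
  intro i
  fin_cases i
  · exact h.1.1
  · exact h.1.2
  · exact h.2

theorem codeT_lt (k : ℕ) : codeT k < 32768 := Nat.mod_lt _ (by norm_num)
theorem codeU_lt (k : ℕ) : codeU k < 32768 := Nat.mod_lt _ (by norm_num)
theorem wC_zero : wC 0 = 0 := by decide
theorem dC_zero : ∀ k, dC k 0 = true := by intro k; simp [dC, dN]

theorem pack3 : Pack (Fin 3 → Fin 8) (Fin 3 → Fin 32) (bW 3) (bD 3) 3 := by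
  have key : ∀ x (i : Bool), bW 3 (blk (codeT (idx x))) = 3 → x ∉ {x | idx x = 73} →
      okU (2 * idx x + i.toNat) = true := by
    intro x i hx hv
    have h2 : (2 * idx x + i.toNat) / 2 = idx x := by cases i <;> simp <;> omega
    rw [blk_W] at hx
    have hv' : ¬ idx x = 73 := hv
    simp [okU, h2, hx, hv']
  have klt : ∀ x (i : Bool), 2 * idx x + i.toNat < 1024 := by
    intro x i
    have := idx_lt x
    have := Bool.toNat_le i
    omega
  refine ⟨fun x => blk (codeT (idx x)), fun x i => blk (codeU (2 * idx x + i.toNat)),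
    {x | idx x = 73}, fun _ => blk 0, ?_, ?_, ?_, ?_, ?_, ?_, ?_⟩
  · intro x y he
    exact idx_inj (chk_inj _ _ _ _ chkT _ _ (idx_lt x) (idx_lt y) rfl rfl
      (blk_inj (codeT_lt _) (codeT_lt _) he))
  · intro x
    rw [blk_W]
    exact (okT1 _ (idx_lt x)).1
  · intro x
    exact blk_D _ _ (okT1 _ (idx_lt x)).2
  · intro x i hx hv
    have h := okU1 _ (klt x i) (key x i hx hv)
    have h2 : (2 * idx x + i.toNat) / 2 = idx x := by cases i <;> simp <;> omega
    rw [h2] at h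
    rw [blk_W]
    exact ⟨h.1, blk_D _ _ h.2⟩
  · intro x i y j hx hv hy hv' he
    have := chk_inj _ _ _ _ chkU _ _ (klt x i) (klt y j) (key x i hx hv) (key y j hy hv')
      (blk_inj (codeU_lt _) (codeU_lt _) he)
    have hi := Bool.toNat_le i
    have hj := Bool.toNat_le j
    refine ⟨idx_inj (by omega), ?_⟩
    have : i.toNat = j.toNat := by omega
    revert this
    cases i <;> cases j <;> simp
  · intro x _
    rw [blk_W, wC_zero]
    exact ⟨by norm_num, blk_D _ _ (dC_zero _)⟩
  · intro x hx y hy _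
    exact idx_inj (hx.trans hy.symm)

theorem packAll (w : ℕ) (hw : 3 ≤ w) : Pack (Fin w → Fin 8) (Fin w → Fin 32) (bW w) (bD w) w := by
  induction w, hw using Nat.le_induction with
  | base => exact pack3
  | succ w _ ih =>
    refine ih.step.transport (Fin.consEquiv (fun _ => Fin 8)).symm (Fin.consEquiv (fun _ => Fin 32))
      ?_ ?_
    · rintro ⟨b, y⟩
      simp [bW, Fin.sum_univ_succ, Fin.consEquiv]
    · rintro x ⟨b, y⟩ ⟨h1, h2⟩ i
      refine Fin.cases ?_ (fun i => ?_) i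
      · exact h1
      · exact h2 i

theorem existsDomMap_of {L R : Type} [Fintype L] [Fintype R] (π : R → L) (w m n : ℕ)
    (hL : Fintype.card L = m) (hR : Fintype.card R = n)
    (φ : (L → Bool) → (R → Bool)) (hφ : Function.Injective φ)
    (hw : ∀ x, (Finset.univ.filter fun r => φ x r = true).card ≤ w)
    (hd : ∀ x r, φ x r = true → x (π r) = true) : ExistsDomMap m n w := by
  classical
  have e : L ≃ Fin m := Fintype.equivFinOfCardEq hL
  have f : R ≃ Fin n := Fintype.equivFinOfCardEq hR
  refine ⟨fun x j => φ (fun l => x (e l)) (f.symm j),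
    Finset.univ.image (fun j => (e (π (f.symm j)), j)), ?_, ?_, ?_, ?_⟩
  · intro j
    exact ⟨e (π (f.symm j)), Finset.mem_image.2 ⟨j, Finset.mem_univ _, rfl⟩⟩
  · intro x y h
    have : (fun l => x (e l)) = fun l => y (e l) := by
      apply hφ
      funext r
      have := congrFun h (f r)
      simpa using this
    funext i
    have := congrFun this (e.symm i)
    simpa using this
  · intro x
    refine le_trans (le_of_eq ?_) (hw (fun l => x (e l)))
    unfold wt
    refine Finset.card_bij (fun j _ => f.symm j) ?_ ?_ ?_
    · intro j hj; simpa using hj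
    · intro a _ b _ h; exact f.symm.injective h
    · intro r hr; exact ⟨f r, by simpa using hr, by simp⟩
  · intro x p hp hx
    obtain ⟨j, -, rfl⟩ := Finset.mem_image.1 hp
    by_contra hc
    have := hd _ _ (Bool.eq_true_of_not_eq_false hc)
    simp only at hx
    rw [hx] at this
    exact absurd this (by simp)

def pp : Fin 5 → Fin 3 := ![0, 1, 1, 2, 2]

theorem enc_ex : ∀ f : Fin 3 → Bool, ∃ k : Fin 8, ∀ j : Fin 3, (k : ℕ).testBit j = f j := by
  decide
theorem dec_inj : ∀ k l : Fin 32, (∀ j : Fin 5, (k : ℕ).testBit j = (l : ℕ).testBit j) → k = l := by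
  decide +kernel
theorem wN_sum (k : ℕ) : wN k = ∑ j : Fin 5, (k.testBit j).toNat := by
  simp [wN, Fin.sum_univ_five]
theorem dN_bit (x y : ℕ) (h : dN x y = true) (j : Fin 5) (hj : y.testBit j = true) :
    x.testBit (pp j) = true := by
  simp only [dN, Bool.and_eq_true] at h
  obtain ⟨⟨⟨⟨h0, h1⟩, h2⟩, h3⟩, h4⟩ := h
  fin_cases j <;> simp at hj <;> simp [pp] <;> simp_all

theorem upper (m w : ℕ) (hw : 3 ≤ w) (h1 : w ≤ m) (h2 : m ≤ 3 * w) :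
    ExistsDomMap m (2 * m - w) w := by
  classical
  obtain ⟨φ, -, -, -, hinj, hwt, hD, -⟩ := packAll w hw
  choose enc henc using enc_ex
  let P : Fin w × Fin 5 → Fin w × Fin 3 := fun r => (r.1, pp r.2)
  have hc : (3 * w - m) ≤ ((Finset.univ : Finset (Fin w)) ×ˢ ({1, 2} : Finset (Fin 3))).card := by
    rw [Finset.card_product]
    simp
    omega
  obtain ⟨T, hT, hTc⟩ := Finset.exists_subset_card_eq hc
  have hfib : ((Finset.univ : Finset (Fin w × Fin 5)).filter fun r => P r ∈ T).card = 2 * T.card := by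
    rw [Finset.card_eq_sum_card_fiberwise (f := P) (t := T)
      (by intro r hr; simpa using hr), mul_comm, ← smul_eq_mul, ← Finset.sum_const]
    refine Finset.sum_congr rfl ?_
    rintro ⟨i, j⟩ hij
    have hj := hT hij
    have : ((Finset.univ.filter fun r => P r ∈ T).filter fun r => P r = (i, j)) =
        ({i} : Finset (Fin w)) ×ˢ (Finset.univ.filter fun k : Fin 5 => pp k = j) := by
      ext ⟨a, b⟩
      simp only [Finset.mem_filter, Finset.mem_univ, true_and, Finset.mem_product,
        Finset.mem_singleton, P, Prod.mk.injEq]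
      constructor
      · rintro ⟨_, h⟩; exact h
      · rintro ⟨rfl, rfl⟩; exact ⟨hij, rfl, rfl⟩
    rw [this, Finset.card_product, Finset.card_singleton, one_mul]
    have hj' : j = 1 ∨ j = 2 := by simpa using hj
    rcases hj' with rfl | rfl <;> decide
  let ext : ({l : Fin w × Fin 3 // l ∉ T} → Bool) → (Fin w → Fin 8) := fun x i =>
    enc (fun j => if h : (i, j) ∉ T then x ⟨(i, j), h⟩ else false)
  have hext : ∀ x i j, ((ext x i : Fin 8) : ℕ).testBit (j : Fin 3) =
      if h : (i, j) ∉ T then x ⟨(i, j), h⟩ else false := fun x i j => henc _ j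
  have hdom : ∀ x (i : Fin w) (j : Fin 5), ((φ (ext x) i : Fin 32) : ℕ).testBit j = true →
      ((ext x i : Fin 8) : ℕ).testBit (pp j) = true := fun x i j h => dN_bit _ _ (hD (ext x) i) j h
  refine existsDomMap_of (L := {l : Fin w × Fin 3 // l ∉ T}) (R := {r : Fin w × Fin 5 // P r ∉ T})
    (fun r => ⟨P r.1, r.2⟩) w m (2 * m - w) ?_ ?_
    (fun x r => ((φ (ext x) r.1.1 : Fin 32) : ℕ).testBit r.1.2) ?_ ?_ ?_
  · rw [Fintype.card_subtype_compl]
    simp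
    omega
  · rw [Fintype.card_subtype_compl, Fintype.card_subtype, hfib]
    simp
    omega
  · intro x y h
    have : ext x = ext y := by
      apply hinj
      funext i
      apply dec_inj
      intro j
      by_cases hP : P (i, j) ∈ T
      · have key : ∀ z, ((φ (ext z) i : Fin 32) : ℕ).testBit j = false := by
          intro z
          by_contra hcon
          have := hdom z i j (Bool.eq_true_of_not_eq_false hcon)
          rw [hext, dif_neg (not_not.2 hP)] at this
          exact absurd this (by simp)
        rw [key, key]
      · exact congrFun h ⟨(i, j), hP⟩
    funext ⟨⟨i, j⟩, hl⟩
    have h3 := hext x i j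
    rw [this, hext, dif_pos hl, dif_pos hl] at h3
    exact h3.symm
  · intro x
    refine le_trans ?_ (hwt (ext x))
    have : bW w (φ (ext x)) = (Finset.univ.filter fun r : Fin w × Fin 5 =>
        ((φ (ext x) r.1 : Fin 32) : ℕ).testBit r.2 = true).card := by
      unfold bW
      rw [Finset.card_filter, Fintype.sum_prod_type]
      refine Finset.sum_congr rfl fun i _ => ?_
      rw [wN_sum]
      refine Finset.sum_congr rfl fun j _ => ?_
      cases ((φ (ext x) i : Fin 32) : ℕ).testBit j <;> simp
    rw [this]
    refine Finset.card_le_card_of_injOn (fun r => r.1) ?_ ?_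
    · intro r hr; simpa using hr
    · intro a _ b _ h; exact Subtype.ext h
  · intro x r hr
    have h3 := hdom x _ _ hr
    rw [hext, dif_pos r.2] at h3
    exact h3

theorem lower (m n w : ℕ) (h : ExistsDomMap m n w) : 2 * m - w ≤ n := by
  classical
  obtain ⟨φ, E, hE, hinj, hwt, hD⟩ := h
  choose π hπ using hE
  let d : Fin m → ℕ := fun i => (Finset.univ.filter fun j => π j = i).card
  let S : Finset (Fin m) := Finset.univ.filter fun i => d i ≤ 1
  let B : Finset (Fin n) := Finset.univ.filter fun j => π j ∈ S
  have hsum : ∀ A : Finset (Fin m),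
      (Finset.univ.filter fun j => π j ∈ A).card = ∑ i ∈ A, d i := by
    intro A
    rw [Finset.card_eq_sum_card_fiberwise (f := π) (t := A) (by intro r hr; simpa using hr)]
    refine Finset.sum_congr rfl fun i hi => ?_
    simp only [d]
    congr 1
    ext j
    simp only [Finset.mem_filter, Finset.mem_univ, true_and]
    constructor
    · exact fun h => h.2
    · rintro rfl; exact ⟨hi, rfl⟩
  have hBS : B.card ≤ S.card := by
    rw [hsum S, Finset.card_eq_sum_ones]
    exact Finset.sum_le_sum fun i hi => (Finset.mem_filter.1 hi).2
  let g : Finset (Fin m) → Finset (Fin n) := fun A =>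
    Finset.univ.filter fun j => φ (fun i => decide (i ∈ A)) j = true
  have gmaps : ∀ A ∈ S.powerset, g A ∈ B.powerset := by
    intro A hA
    rw [Finset.mem_powerset] at hA ⊢
    intro j hj
    have hj' : φ (fun i => decide (i ∈ A)) j = true := (Finset.mem_filter.1 hj).2
    refine Finset.mem_filter.2 ⟨Finset.mem_univ _, hA ?_⟩
    by_contra hc
    have := hD (fun i => decide (i ∈ A)) _ (hπ j) (by simpa using hc)
    simp only at this
    rw [this] at hj'
    exact absurd hj' (by simp)
  have ginj : Function.Injective g := by
    intro A A' he
    have : (fun i => decide (i ∈ A)) = fun i => decide (i ∈ A') := by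
      apply hinj
      funext j
      have := Finset.ext_iff.1 he j
      simp only [g, Finset.mem_filter, Finset.mem_univ, true_and] at this
      exact Bool.eq_iff_iff.2 this
    ext i
    simpa using congrFun this i
  have hcard : S.powerset.card ≤ B.powerset.card :=
    Finset.card_le_card_of_injOn g gmaps ginj.injOn
  have hcard' : B.powerset.card ≤ S.powerset.card := by
    rw [Finset.card_powerset, Finset.card_powerset]
    exact Nat.pow_le_pow_right (by norm_num) hBS
  have hSB : S.card ≤ B.card := by
    rw [Finset.card_powerset, Finset.card_powerset] at hcard
    exact (Nat.pow_le_pow_iff_right (by norm_num)).1 hcard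
  have himg : S.powerset.image g = B.powerset := by
    apply Finset.eq_of_subset_of_card_le
    · intro y hy
      obtain ⟨A, hA, rfl⟩ := Finset.mem_image.1 hy
      exact gmaps A hA
    · rw [Finset.card_image_of_injective _ ginj]; exact hcard'
  obtain ⟨A, -, hA⟩ := Finset.mem_image.1 (himg ▸ Finset.mem_powerset_self B)
  have hBw : B.card ≤ w := by
    rw [← hA]
    exact hwt _
  have hn : n = ∑ i, d i := by
    have := hsum Finset.univ
    simpa using this
  have hsplit : ∑ i, d i = ∑ i ∈ S, d i + ∑ i ∈ Sᶜ, d i := (Finset.sum_add_sum_compl S d).symm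
  have h2 : 2 * Sᶜ.card ≤ ∑ i ∈ Sᶜ, d i := by
    rw [mul_comm, ← smul_eq_mul, ← Finset.sum_const]
    refine Finset.sum_le_sum fun i hi => ?_
    have : ¬ d i ≤ 1 := by simpa [S] using hi
    omega
  have h3 : S.card + Sᶜ.card = m := by simpa using Finset.card_add_card_compl S
  have h4 : B.card = ∑ i ∈ S, d i := hsum S
  omega

/-- For w ≥ 3 and w ≤ m ≤ 3w, ν(m,w) = 2m - w, where ν(m,w) is the minimum n for
which an (m,n,w)-domination mapping exists. -/
theorem stmt_9 (m w : ℕ) (hw : 3 ≤ w) (h1 : w ≤ m) (h2 : m ≤ 3 * w) :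
    sInf {n : ℕ | ExistsDomMap m n w} = 2 * m - w := by
  apply le_antisymm
  · exact Nat.sInf_le (upper m w hw h1 h2)
  · exact le_csInf ⟨_, upper m w hw h1 h2⟩ fun n hn => lower m n w hn
end

section
/- For every w ≥ 1, there exists a constant m_0(w) with the following property: for all m ≥ m_0(w) and all n, if Σ_{j=0}^{w} C(n,j) ≥ 2^m (i.e., |B(n,w)| ≥ 2^m), then an (m,n,w)-domination mapping exists. -/
open Finset in
def QQ {m : ℕ} (D : Finset (Finset (Fin m))) (A : Finset (Fin m)) : ℕ :=
  (univ.filter fun σ : Equiv.Perm (Fin m) => A.image σ ∈ D).card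

open Finset in
lemma QQ_mono {m : ℕ} {D : Finset (Finset (Fin m))} (hD : ∀ A ∈ D, ∀ B ⊆ A, B ∈ D)
    {A A' : Finset (Fin m)} (h : A ⊆ A') : QQ D A' ≤ QQ D A := by
  apply card_le_card
  intro σ hσ
  simp only [mem_filter, mem_univ, true_and] at hσ ⊢
  exact hD _ hσ _ (image_subset_image h)

open Finset in
lemma exists_perm_image {m : ℕ} {A A' : Finset (Fin m)} (h : A.card = A'.card) :
    ∃ τ : Equiv.Perm (Fin m), A.image τ = A' := by
  let e : {x // x ∈ A} ≃ {x // x ∈ A'} := Finset.equivOfCardEq h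
  refine ⟨e.extendSubtype, ?_⟩
  apply eq_of_subset_of_card_le
  · intro x hx
    rw [mem_image] at hx
    obtain ⟨a, ha, rfl⟩ := hx
    exact e.extendSubtype_mem a ha
  · rw [card_image_of_injective _ (Equiv.injective _), h]

open Finset in
lemma QQ_eq {m : ℕ} {D : Finset (Finset (Fin m))}
    {A A' : Finset (Fin m)} (h : A.card = A'.card) : QQ D A = QQ D A' := by
  obtain ⟨τ, rfl⟩ := exists_perm_image h
  unfold QQ
  symm
  apply card_bij' (fun σ _ => σ * τ) (fun σ _ => σ * τ⁻¹)
  · intro σ hσ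
    simpa [image_image] using hσ
  · intro σ hσ
    simpa [image_image, Function.comp_def] using hσ
  · intro σ _; simp
  · intro σ _; simp

open Finset in
lemma QQ_anti {m : ℕ} {D : Finset (Finset (Fin m))} (hD : ∀ A ∈ D, ∀ B ⊆ A, B ∈ D)
    {A A' : Finset (Fin m)} (h : A.card ≤ A'.card) : QQ D A' ≤ QQ D A := by
  obtain ⟨C, hC, hc⟩ := exists_subset_card_eq h
  rw [← QQ_eq hc]
  exact QQ_mono hD hC

open Finset in
lemma QQ_le {m : ℕ} (D : Finset (Finset (Fin m))) (A : Finset (Fin m)) :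
    QQ D A ≤ m.factorial := by
  unfold QQ
  refine (card_filter_le _ _).trans ?_
  simp [Fintype.card_perm]

open Finset in
lemma sum_QQ {m : ℕ} (D : Finset (Finset (Fin m))) :
    ∑ T, QQ D T = m.factorial * D.card := by
  unfold QQ
  simp_rw [card_filter]
  rw [sum_comm]
  have : ∀ σ : Equiv.Perm (Fin m), 
      ∑ T : Finset (Fin m), (if T.image σ ∈ D then 1 else 0) = D.card := by
    intro σ
    have := Equiv.sum_comp (Equiv.finsetCongr σ) (fun T => if T ∈ D then 1 else 0)
    simp only [Equiv.finsetCongr_apply, map_eq_image] at this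
    simpa using this
  simp [this, Fintype.card_perm]

open Finset in
lemma QQ_gain {m w : ℕ} {D : Finset (Finset (Fin m))} (hD : ∀ A ∈ D, ∀ B ⊆ A, B ∈ D)
    {A V : Finset (Fin m)} (hA : A ∈ D) (hV : V ∉ D) (hAV : A ⊆ V) (hc : V.card = w) :
    QQ D V + (m - w).factorial ≤ QQ D A := by
  classical
  let F : Finset (Equiv.Perm (Fin m)) :=
    (univ : Finset (Equiv.Perm {x // x ∉ V})).image Equiv.Perm.ofSubtype
  have hF : F.card = (m - w).factorial := by
    rw [card_image_of_injective _ Equiv.Perm.ofSubtype_injective]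
    rw [card_univ, Fintype.card_perm]
    congr 1
    rw [Fintype.card_subtype_compl]
    simp [hc]
  have hfix : ∀ σ ∈ F, ∀ B ⊆ V, B.image σ = B := by
    intro σ hσ B hB
    simp only [F, mem_image, mem_univ, true_and] at hσ
    obtain ⟨τ, rfl⟩ := hσ
    rw [image_congr (g := id), image_id]
    intro x hx
    exact Equiv.Perm.ofSubtype_apply_of_not_mem τ (by simpa using hB hx)
  unfold QQ
  rw [← hF, ← card_union_of_disjoint]
  · apply card_le_card
    intro σ hσ
    rw [mem_union] at hσ
    simp only [mem_filter, mem_univ, true_and] at hσ ⊢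
    rcases hσ with h | h
    · exact hD _ h _ (image_subset_image hAV)
    · rw [hfix σ h A hAV]; exact hA
  · rw [disjoint_left]
    intro σ h h'
    simp only [mem_filter, mem_univ, true_and] at h
    rw [hfix σ h' V (Subset.refl _)] at h
    exact hV h

open Finset in
lemma QQ_words {m w q : ℕ} {D : Finset (Finset (Fin m))} (hD : ∀ A ∈ D, ∀ B ⊆ A, B ∈ D)
    {A : Finset (Fin m)} (hA : A.card = w) :
    (univ.filter fun y : Finset (Fin q × Fin m) => y.card ≤ w).card * QQ D A ≤
      m.factorial * 
      (univ.filter fun y : Finset (Fin q × Fin m) => y.card ≤ w ∧ y.image Prod.snd ∈ D).card := by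
  have key : ∀ σ : Equiv.Perm (Fin m),
      (univ.filter fun y : Finset (Fin q × Fin m) => 
        y.card ≤ w ∧ (y.image Prod.snd).image σ ∈ D).card = 
      (univ.filter fun y : Finset (Fin q × Fin m) => 
        y.card ≤ w ∧ y.image Prod.snd ∈ D).card := by
    intro σ
    let e : Fin q × Fin m ≃ Fin q × Fin m := Equiv.prodCongr (Equiv.refl _) σ
    apply card_equiv (Equiv.finsetCongr e)
    intro y
    simp only [mem_filter, mem_univ, true_and, Equiv.finsetCongr_apply, map_eq_image,
      image_image]
    rw [card_image_of_injective _ e.toEmbedding.injective]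
    rfl
  have h2 : m.factorial * 
      (univ.filter fun y : Finset (Fin q × Fin m) => y.card ≤ w ∧ y.image Prod.snd ∈ D).card =
      ∑ σ : Equiv.Perm (Fin m), (univ.filter fun y : Finset (Fin q × Fin m) => 
        y.card ≤ w ∧ (y.image Prod.snd).image σ ∈ D).card := by
    simp [key, Fintype.card_perm]
  rw [h2]
  simp_rw [← filter_filter, card_filter _ (filter _ _)]
  rw [sum_comm, ← smul_eq_mul]
  apply card_nsmul_le_sum
  intro y hy
  rw [← card_filter]
  simp only [mem_filter, mem_univ, true_and] at hy
  exact QQ_anti hD ((card_image_le.trans hy).trans_eq hA.symm)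

open Finset in
lemma core {m w q : ℕ} (hm : 2 * w ≤ m) {D : Finset (Finset (Fin m))} 
    (hD : ∀ A ∈ D, ∀ B ⊆ A, B ∈ D)
    {A W : Finset (Fin m)} (hA : A ∈ D) (hAc : A.card = w) (hW : W ∉ D) (hWc : W.card = w)
    {δ : ℝ} (hδ : 0 ≤ δ) (hδm : δ * (m:ℝ) ^ (2 * w) ≤ 1)
    (hS : ((univ.filter fun T : Finset (Fin m) => T.card < 2 * w).card : ℝ) ≤ 2 ^ m * δ / 2)
    (hB : (2:ℝ) ^ m - (univ.filter fun y : Finset (Fin q × Fin m) => y.card ≤ w).card 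
      ≤ 2 ^ m * δ / 2) :
    D.card ≤ (univ.filter fun y : Finset (Fin q × Fin m) => 
        y.card ≤ w ∧ y.image Prod.snd ∈ D).card := by
  obtain ⟨V, hV, hVc⟩ := exists_superset_card_eq (s := A ∪ W) (n := 2 * w) 
    ((card_union_le _ _).trans (by omega)) (by simpa using hm)
  have hVD : V ∉ D := fun h => hW (hD _ h _ (subset_union_right.trans hV))
  have h1 := QQ_gain hD hA hVD (subset_union_left.trans hV) hVc
  have h2 := QQ_words (q := q) hD hAc
  have h3 := QQ_le D A
  have h4 : m.factorial ≤ (m - 2 * w).factorial * m ^ (2 * w) := by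
    rw [← Nat.factorial_mul_descFactorial hm]
    exact Nat.mul_le_mul_left _ (Nat.descFactorial_le_pow _ _)
  have h5 : m.factorial * D.card ≤ 
      (univ.filter fun T : Finset (Fin m) => T.card < 2 * w).card * m.factorial
        + 2 ^ m * QQ D V := by
    rw [← sum_QQ, ← sum_filter_add_sum_filter_not univ (fun T : Finset (Fin m) => T.card < 2 * w)]
    apply add_le_add
    · rw [← smul_eq_mul]
      exact sum_le_card_nsmul _ _ _ fun T _ => QQ_le D T
    · refine (sum_le_card_nsmul _ _ (QQ D V) ?_).trans ?_
      · intro T hT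
        simp only [mem_filter, mem_univ, true_and] at hT
        exact QQ_anti hD (by omega)
      · rw [smul_eq_mul]
        apply Nat.mul_le_mul_right
        refine (card_filter_le _ _).trans ?_
        simp
  generalize (univ.filter fun T : Finset (Fin m) => T.card < 2 * w).card = S at *
  generalize (univ.filter fun y : Finset (Fin q × Fin m) => y.card ≤ w).card = B at *
  generalize (univ.filter fun y : Finset (Fin q × Fin m) => 
        y.card ≤ w ∧ y.image Prod.snd ∈ D).card = N at *
  generalize QQ D V = v at *
  generalize QQ D A = a at *
  have hM := Nat.factorial_pos m
  generalize m.factorial = M at *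
  generalize (m - 2 * w).factorial = f at *
  refine Nat.le_of_mul_le_mul_left (?_ : M * _ ≤ M * _) hM
  refine h5.trans (le_trans ?_ h2)
  have h1' : (v:ℝ) + f ≤ a := by exact_mod_cast h1
  have h3' : (a:ℝ) ≤ M := by exact_mod_cast h3
  have h4' : (M:ℝ) ≤ f * (m:ℝ) ^ (2*w) := by exact_mod_cast h4
  have hM' : (0:ℝ) < M := by exact_mod_cast hM
  have hX : (0:ℝ) < 2 ^ m := by positivity
  have ha0 : (0:ℝ) ≤ a := by positivity
  have hf0 : (0:ℝ) ≤ f := by positivity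
  have h6 : δ * M ≤ f := by
    calc δ * M ≤ δ * (f * (m:ℝ) ^ (2*w)) := by gcongr
      _ = f * (δ * (m:ℝ) ^ (2*w)) := by ring
      _ ≤ f * 1 := by gcongr
      _ = f := by ring
  have : (S:ℝ) * M + 2 ^ m * v ≤ B * a := by
    generalize (2:ℝ) ^ m = X at *
    have e1 : X * v ≤ X * (a - f) := by gcongr; linarith
    have e2 : (S:ℝ) * M ≤ X * δ / 2 * M := by gcongr
    have e3 : (X - B) * a ≤ X * δ / 2 * a := by gcongr
    have e4 : X * δ / 2 * a ≤ X * δ / 2 * M := by gcongr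
    have e5 : X * (δ * M) ≤ X * f := by gcongr
    nlinarith
  exact_mod_cast this

open Finset in
lemma card_ball (α : Type) [Fintype α] [DecidableEq α] (w : ℕ) :
    (univ.filter fun y : Finset α => y.card < w).card =
      ∑ j ∈ range w, Nat.choose (Fintype.card α) j := by
  rw [card_eq_sum_card_fiberwise (f := Finset.card) (t := range w)]
  · apply sum_congr rfl
    intro j hj
    rw [← card_univ, ← card_powersetCard]
    congr 1
    ext y
    simp only [mem_filter, mem_univ, true_and, mem_powersetCard, subset_univ, mem_range] at hj ⊢
    omega
  · intro y hy
    simpa using hy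

lemma eventually_poly (K k : ℕ) : ∃ m₀ : ℕ, ∀ m : ℕ, m₀ ≤ m → K * m ^ k < 2 ^ m := by
  have h := tendsto_pow_const_div_const_pow_of_one_lt k (r := (2:ℝ)) (by norm_num)
  have h2 := h.eventually (gt_mem_nhds (show (0:ℝ) < 1 / (K + 1) by positivity))
  obtain ⟨m₀, h3⟩ := Filter.eventually_atTop.1 h2
  refine ⟨m₀, fun m hm => ?_⟩
  have h4 := h3 m hm
  rw [div_lt_div_iff₀ (by positivity) (by positivity)] at h4
  have h5 : (K:ℝ) * (m:ℝ) ^ k < 2 ^ m := by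
    have : (0:ℝ) ≤ (m:ℝ) ^ k := by positivity
    nlinarith
  exact_mod_cast h5

open Finset in
lemma ball_step (a w : ℕ) (x : ℝ) (hx : (w:ℝ) ≤ x * (a + 1)) :
    ((∑ j ∈ range (w + 1), Nat.choose (a + 1) j : ℕ) : ℝ) * (1 - x) ≤
      ((∑ j ∈ range (w + 1), Nat.choose a j : ℕ) : ℝ) := by
  push_cast
  rw [sum_mul]
  apply sum_le_sum
  intro j hj
  have hj' : j ≤ w := by simpa [Nat.lt_succ_iff] using hj
  have hjr : (j:ℝ) ≤ w := by exact_mod_cast hj'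
  have ha : (0:ℝ) < a + 1 := by positivity
  have hc : (0:ℝ) ≤ (Nat.choose (a+1) j : ℝ) := by positivity
  rcases le_or_gt j (a + 1) with h | h
  · have e := Nat.add_one_mul_choose_eq a j
    have e2 : (Nat.choose a j : ℝ) * (a + 1) = Nat.choose (a+1) j * ((a + 1) - j) := by
      have := Nat.choose_mul_succ_eq a j
      have h' : (((a + 1 - j : ℕ)) : ℝ) = (a + 1) - j := by
        rw [Nat.cast_sub h]; push_cast; ring
      rw [← h']
      exact_mod_cast this
    have : (Nat.choose (a+1) j : ℝ) * (1 - x) * (a + 1) ≤ Nat.choose a j * (a + 1) := by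
      rw [e2]
      have : (1 - x) * (a + 1) ≤ (a + 1) - j := by linarith
      rw [mul_assoc]
      gcongr
    exact le_of_mul_le_mul_right this ha
  · rw [Nat.choose_eq_zero_of_lt h]
    simp

open Finset in
lemma ball_steps (a w : ℕ) (x : ℝ) (hx0 : 0 ≤ x) (hx : (w:ℝ) ≤ x * (a + 1)) (r : ℕ) :
    ((∑ j ∈ range (w + 1), Nat.choose (a + r) j : ℕ) : ℝ) * (1 - r * x) ≤
      ((∑ j ∈ range (w + 1), Nat.choose a j : ℕ) : ℝ) := by
  induction r with
  | zero => simp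
  | succ r ih =>
    have h := ball_step (a + r) w x (by
      push_cast
      have : (0:ℝ) ≤ x * r := by positivity
      nlinarith)
    rw [← add_assoc]
    generalize (∑ j ∈ range (w + 1), Nat.choose (a + r + 1) j : ℕ) = b2 at *
    generalize (∑ j ∈ range (w + 1), Nat.choose (a + r) j : ℕ) = b1 at *
    generalize (∑ j ∈ range (w + 1), Nat.choose a j : ℕ) = b0 at *
    have hb2 : (0:ℝ) ≤ b2 := by positivity
    have hb0 : (0:ℝ) ≤ b0 := by positivity
    push_cast
    rcases le_or_gt 0 (1 - r * x) with h0 | h0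
    · have h1 := mul_le_mul_of_nonneg_right h h0
      have h2 : (0:ℝ) ≤ b2 * (r * x * x) := by positivity
      nlinarith
    · have : (1 - (r + 1) * x) ≤ 0 := by linarith
      nlinarith

open Finset in
lemma numeric (w : ℕ) (hw : 1 ≤ w) : ∃ m₀ : ℕ, ∀ m : ℕ, m₀ ≤ m → 2 * w ≤ m ∧
    ((univ.filter fun T : Finset (Fin m) => T.card < 2 * w).card : ℝ) ≤
      2 ^ m * (1 / (m:ℝ) ^ (2 * w)) / 2 ∧
    ∀ n : ℕ, 2 ^ m ≤ ∑ j ∈ Finset.range (w + 1), Nat.choose n j →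
      1 ≤ n / m ∧ (2:ℝ) ^ m -
        (univ.filter fun y : Finset (Fin (n / m) × Fin m) => y.card ≤ w).card
      ≤ 2 ^ m * (1 / (m:ℝ) ^ (2 * w)) / 2 := by
  obtain ⟨m₁, h1⟩ := eventually_poly (4 * w) (4 * w)
  obtain ⟨m₂, h2⟩ := eventually_poly ((w + 1) * (2 * w) ^ w) ((2 * w + 1) * w)
  refine ⟨m₁ + m₂ + 2 * w, fun m hm => ⟨by omega, ?_, ?_⟩⟩
  · have hm0 : 1 ≤ m := by omega
    have hS : (univ.filter fun T : Finset (Fin m) => T.card < 2 * w).card ≤ 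
        (2 * w) * m ^ (2 * w) := by
      rw [card_ball]
      refine (sum_le_card_nsmul _ _ (m ^ (2 * w)) ?_).trans ?_
      · intro j hj
        rw [mem_range] at hj
        rw [Fintype.card_fin]
        exact (Nat.choose_le_pow _ _).trans (Nat.pow_le_pow_right hm0 hj.le)
      · simp
    have h3 := (h1 m (by omega)).le
    have hmp : (0:ℝ) < (m:ℝ) ^ (2 * w) := by positivity
    have hS' : ((univ.filter fun T : Finset (Fin m) => T.card < 2 * w).card : ℝ) ≤ 
        (2 * w) * (m:ℝ) ^ (2 * w) := by exact_mod_cast hS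
    have h3' : (4 * w : ℝ) * (m:ℝ) ^ (4 * w) ≤ 2 ^ m := by exact_mod_cast h3
    have e : (m:ℝ) ^ (4 * w) = (m:ℝ) ^ (2 * w) * (m:ℝ) ^ (2 * w) := by
      rw [← pow_add]; congr 1; ring
    rw [e] at h3'
    rw [mul_one_div, div_div, le_div_iff₀ (by positivity)]
    nlinarith
  · intro n hn
    have hm0 : 1 ≤ m := by omega
    have hq : 2 * w * m ^ (2 * w) ≤ n / m := by
      by_contra! hlt
      have hn2 : n ≤ 2 * w * m ^ (2 * w + 1) := by
        have := (Nat.div_lt_iff_lt_mul (by omega)).1 hlt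
        rw [pow_succ, ← mul_assoc]
        exact this.le
      have hpos : 1 ≤ 2 * w * m ^ (2 * w + 1) := Nat.succ_le_of_lt (by positivity)
      have hb : ∑ j ∈ Finset.range (w + 1), Nat.choose n j ≤ 
          (w + 1) * (2 * w * m ^ (2 * w + 1)) ^ w := by
        refine (sum_le_card_nsmul _ _ ((2 * w * m ^ (2 * w + 1)) ^ w) ?_).trans ?_
        · intro j hj
          rw [mem_range] at hj
          exact (Nat.choose_le_pow _ _).trans ((Nat.pow_le_pow_left hn2 _).trans
            (Nat.pow_le_pow_right hpos (by omega)))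
        · simp
      have h3 := h2 m (by omega)
      rw [mul_pow, ← pow_mul, ← mul_assoc] at hb
      omega
    have hmpN : 1 ≤ m ^ (2 * w) := Nat.succ_le_of_lt (by positivity)
    refine ⟨by nlinarith, ?_⟩
    have hcard := card_ball (Fin (n / m) × Fin m) (w + 1)
    simp only [Nat.lt_succ_iff, Fintype.card_prod, Fintype.card_fin] at hcard
    rw [hcard]
    set q := n / m with hqdef
    have hnm : n = q * m + n % m := by
      rw [hqdef, mul_comm]; exact (Nat.div_add_mod n m).symm
    have hr : n % m < m := Nat.mod_lt _ (by omega)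
    generalize n % m = r at *
    have hmr : (1:ℝ) ≤ m := by exact_mod_cast hm0
    have hmp : (0:ℝ) < (m:ℝ) ^ (2 * w) := by positivity
    have hq' : 2 * w * (m:ℝ) ^ (2 * w) ≤ q := by exact_mod_cast hq
    have hrm : (r:ℝ) ≤ m := by exact_mod_cast hr.le
    have h4 := ball_steps (q * m) w (1 / (m * (2 * (m:ℝ) ^ (2 * w)))) (by positivity) (by
      rw [one_div_mul_eq_div, le_div_iff₀ (by positivity)]
      push_cast
      nlinarith) r
    rw [← hnm] at h4
    have h5 : (r:ℝ) * (1 / (m * (2 * (m:ℝ) ^ (2 * w)))) ≤ 1 / (m:ℝ) ^ (2 * w) / 2 := by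
      calc (r:ℝ) * (1 / (m * (2 * (m:ℝ) ^ (2 * w)))) 
          ≤ m * (1 / (m * (2 * (m:ℝ) ^ (2 * w)))) := by gcongr
        _ = _ := by field_simp
    have h6 : 1 / (m:ℝ) ^ (2 * w) ≤ 1 := by
      rw [div_le_one hmp]; exact one_le_pow₀ hmr
    have hn' : (2:ℝ) ^ m ≤ ((∑ j ∈ range (w + 1), Nat.choose n j : ℕ) : ℝ) := by exact_mod_cast hn
    generalize (∑ j ∈ range (w + 1), Nat.choose n j : ℕ) = b at *
    generalize (∑ j ∈ range (w + 1), Nat.choose (q * m) j : ℕ) = b' at *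
    generalize (r:ℝ) * (1 / (m * (2 * (m:ℝ) ^ (2 * w)))) = u at *
    generalize 1 / (m:ℝ) ^ (2 * w) = d at *
    have h7 : (2:ℝ) ^ m * (1 - u) ≤ b * (1 - u) := by
      apply mul_le_mul_of_nonneg_right hn'
      linarith
    have h8 : (2:ℝ) ^ m * u ≤ 2 ^ m * (d / 2) := by gcongr
    linarith

open Finset in
lemma hall_cond {m n w : ℕ} (hm : 0 < m) (hwm : 2 * w ≤ m)
    (hS : ((univ.filter fun T : Finset (Fin m) => T.card < 2 * w).card : ℝ) ≤
      2 ^ m * (1 / (m:ℝ) ^ (2 * w)) / 2)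
    (hn : 2 ^ m ≤ ∑ j ∈ Finset.range (w + 1), Nat.choose n j)
    (hq : 1 ≤ n / m) 
    (hB : (2:ℝ) ^ m - (univ.filter fun y : Finset (Fin (n / m) × Fin m) => y.card ≤ w).card
      ≤ 2 ^ m * (1 / (m:ℝ) ^ (2 * w)) / 2)
    (g : Fin n → Fin m) (hg : ∀ j, (g j : ℕ) = j % m)
    {D : Finset (Finset (Fin m))} (hD : ∀ A ∈ D, ∀ B ⊆ A, B ∈ D) :
    D.card ≤ (univ.filter fun y : Finset (Fin n) => y.card ≤ w ∧ y.image g ∈ D).card := by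
  have hqm : n / m * m ≤ n := Nat.div_mul_le_self n m
  let ι : Fin (n / m) × Fin m → Fin n := fun p => ⟨p.1 * m + p.2, by
    have h1 := p.1.2
    have h2 := p.2.2
    have : (p.1 + 1 : ℕ) * m ≤ n / m * m := Nat.mul_le_mul_right _ h1
    rw [add_mul, one_mul] at this
    omega⟩
  have hgι : ∀ p, g (ι p) = p.2 := by
    intro p
    apply Fin.ext
    rw [hg]
    simp only [ι]
    rw [Nat.mul_add_mod', Nat.mod_eq_of_lt p.2.2]
  have hι : Function.Injective ι := by
    intro p p' h
    have h2 : p.2 = p'.2 := by rw [← hgι, ← hgι, h]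
    have h1 := congrArg Fin.val h
    simp only [ι, h2, add_left_inj] at h1
    have h3 := Nat.eq_of_mul_eq_mul_right hm h1
    exact Prod.ext (Fin.ext h3) h2
  have hle : (univ.filter fun y : Finset (Fin (n / m) × Fin m) => 
        y.card ≤ w ∧ y.image Prod.snd ∈ D).card ≤ 
      (univ.filter fun y : Finset (Fin n) => y.card ≤ w ∧ y.image g ∈ D).card := by
    apply card_le_card_of_injOn (fun y => y.image ι)
    · intro y hy
      simp only [coe_filter, mem_univ, true_and, Set.mem_ofPred_eq, image_image] at hy ⊢
      rw [card_image_of_injective _ hι]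
      have : g ∘ ι = Prod.snd := funext hgι
      rw [this]
      exact hy
    · exact (image_injective hι).injOn
  by_cases h1 : ∃ A ∈ D, A.card = w
  · obtain ⟨A, hA, hAc⟩ := h1
    by_cases h2 : ∃ W, W ∉ D ∧ W.card = w
    · obtain ⟨W, hW, hWc⟩ := h2
      refine le_trans (core hwm hD hA hAc hW hWc (δ := 1 / (m:ℝ) ^ (2 * w)) (by positivity) ?_ 
        hS hB) hle
      rw [one_div_mul_cancel (by positivity)]
    · push Not at h2
      have hall : ∀ T : Finset (Fin m), T.card ≤ w → T ∈ D := by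
        intro T hT
        obtain ⟨T', hT', hc⟩ := exists_superset_card_eq (s := T) (n := w) hT (by simp; omega)
        by_contra h
        by_cases h3 : T' ∈ D
        · exact h (hD _ h3 _ hT')
        · exact h2 T' h3 hc
      have e : (univ.filter fun y : Finset (Fin n) => y.card ≤ w ∧ y.image g ∈ D) =
          (univ.filter fun y : Finset (Fin n) => y.card < w + 1) := by
        ext y
        simp only [mem_filter, mem_univ, true_and, Nat.lt_succ_iff, and_iff_left_iff_imp]
        intro hy
        exact hall _ (card_image_le.trans hy)
      rw [e, card_ball, Fintype.card_fin]
      refine le_trans ?_ hn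
      exact (card_le_univ D).trans (by simp)
  · push Not at h1
    refine le_trans ?_ hle
    have hsmall : ∀ T ∈ D, T.card ≤ w := by
      intro T hT
      by_contra! h
      obtain ⟨T', hT', hc⟩ := exists_subset_card_eq h.le
      exact h1 T' (hD _ hT _ hT') hc
    let κ : Fin m → Fin (n / m) × Fin m := fun i => (⟨0, hq⟩, i)
    have hκ : Function.Injective κ := fun i j h => congrArg Prod.snd h
    apply card_le_card_of_injOn (fun y => y.image κ)
    · intro y hy
      simp only [coe_filter, mem_univ, true_and, Set.mem_ofPred_eq, image_image] at hy ⊢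
      rw [card_image_of_injective _ hκ]
      have : Prod.snd ∘ κ = id := rfl
      rw [this, image_id]
      exact ⟨hsmall y hy, hy⟩
    · exact (image_injective hκ).injOn

open Finset

/-- For every w ≥ 1 there is a constant m₀(w) such that for all m ≥ m₀(w) and all n,
if |B(n,w)| ≥ 2^m then an (m,n,w)-domination mapping exists. -/
theorem stmt_12 (w : ℕ) (hw : 1 ≤ w) :
    ∃ m₀ : ℕ, ∀ m : ℕ, m₀ ≤ m → ∀ n : ℕ,
      2 ^ m ≤ ∑ j ∈ Finset.range (w + 1), Nat.choose n j →
      ExistsDomMap m n w := by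
  obtain ⟨m₀, h⟩ := numeric w hw
  refine ⟨m₀, fun m hm n hn => ?_⟩
  obtain ⟨hwm, hS, h'⟩ := h m hm
  obtain ⟨hq, hB⟩ := h' n hn
  have hm0 : 0 < m := by omega
  let g : Fin n → Fin m := fun j => ⟨j % m, Nat.mod_lt _ hm0⟩
  have hcond := fun D hD => hall_cond hm0 hwm hS hn hq hB g (fun j => rfl) (D := D) hD
  let t : Finset (Fin m) → Finset (Finset (Fin n)) := fun x =>
    univ.filter fun y => y.card ≤ w ∧ y.image g ⊆ x
  have hall : ∀ s : Finset (Finset (Fin m)), s.card ≤ (s.biUnion t).card := by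
    intro s
    let D : Finset (Finset (Fin m)) := univ.filter fun A => ∃ x ∈ s, A ⊆ x
    have hsD : s ⊆ D := by
      intro x hx
      simp only [D, mem_filter, mem_univ, true_and]
      exact ⟨x, hx, Subset.refl _⟩
    refine (card_le_card hsD).trans ((hcond D ?_).trans (card_le_card ?_))
    · intro A hA B hBA
      simp only [D, mem_filter, mem_univ, true_and] at hA ⊢
      obtain ⟨x, hx, hAx⟩ := hA
      exact ⟨x, hx, hBA.trans hAx⟩
    · intro y hy
      simp only [D, t, mem_filter, mem_univ, true_and, mem_biUnion] at hy ⊢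
      obtain ⟨hy1, x, hx, hyx⟩ := hy
      exact ⟨x, hx, hy1, hyx⟩
  obtain ⟨f, hf, hft⟩ := (Finset.all_card_le_biUnion_card_iff_exists_injective t).1 hall
  simp only [t, mem_filter, mem_univ, true_and] at hft
  let X : (Fin m → Bool) → Finset (Fin m) := fun x => univ.filter fun i => x i = true
  have hX : Function.Injective X := by
    intro x x' hxx
    funext i
    have : i ∈ X x ↔ i ∈ X x' := by rw [hxx]
    simp only [X, mem_filter, mem_univ, true_and] at this
    exact Bool.eq_iff_iff.2 this
  refine ⟨fun x j => decide (j ∈ f (X x)), univ.image (fun j => (g j, j)), ?_, ?_, ?_, ?_⟩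
  · intro j
    exact ⟨g j, mem_image.2 ⟨j, mem_univ _, rfl⟩⟩
  · intro x x' hxx
    apply hX
    apply hf
    ext j
    have := congrFun hxx j
    simpa using this
  · intro x
    unfold wt
    simpa using (hft (X x)).1
  · intro x e he hx
    obtain ⟨j, _, rfl⟩ := mem_image.1 he
    simp only [decide_eq_false_iff_not]
    intro hj
    have := (hft (X x)).2 (mem_image_of_mem g hj)
    simp only [X, mem_filter, mem_univ, true_and] at this
    simp [hx] at this
end
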